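/- arXiv:1806.04566 — 2 statements merged into one kernel-verified Lean document; each statement's English description precedes it below -/
import Mathlib

section
/- Let k ≥ 2 and j ∈ {1,…,k−1}, and set p = p(n) = p_{j−1}^−. Let X_* be the number of copies of M_j^* in G_p. Then E[X_*] = Θ((log n)^{j+2}) (there exist constants 0 < c_1 ≤ c_2 such that c_1·(log n)^{j+2} ≤ E[X_*] ≤ c_2·(log n)^{j+2} for all sufficiently large n), and for every ε > 0, Pr(|X_* − E[X_*]| ≤ ε·E[X_*]) → 1 as n → ∞. -/
open MeasureTheory Filter

attribute [local instance] Classical.propDecidable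

namespace RSC

variable {V : Type*}

/-- `A` is an `i`-dimensional simplex of the complex `G`. -/
def IsSimplex (G : Set (Finset V)) (i : ℕ) (A : Finset V) : Prop :=
  A ∈ G ∧ A.card = i + 1

/-- A `k`-dimensional simplicial complex on vertex set `V`. -/
structure IsKComplex (G : Set (Finset V)) (k : ℕ) : Prop where
  down : ∀ A ∈ G, ∀ B, B ⊆ A → B.Nonempty → B ∈ G
  singletons : ∀ v : V, ({v} : Finset V) ∈ G
  dim : ∀ A ∈ G, A.card ≤ k + 1

/-- `i`-cochains with `F₂`-coefficients. -/
abbrev Cochain (G : Set (Finset V)) (i : ℕ) : Type _ :=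
  {A : Finset V // IsSimplex G i A} → ZMod 2

/-- The coboundary map `δ^i : C^i(G) → C^{i+1}(G)`. -/
noncomputable def coboundary (G : Set (Finset V)) (i : ℕ) :
    Cochain G i →ₗ[ZMod 2] Cochain G (i + 1) where
  toFun f := fun σ => ∑ τ ∈ Finset.powersetCard (i + 1) (σ : Finset V),
      if h : IsSimplex G i τ then f ⟨τ, h⟩ else 0
  map_add' f g := by
    funext σ
    simp only [Pi.add_apply, ← Finset.sum_add_distrib]
    refine Finset.sum_congr rfl fun τ _ => ?_
    by_cases h : IsSimplex G i τ <;> simp [h]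
  map_smul' c f := by
    funext σ
    simp only [Pi.smul_apply, RingHom.id_apply, Finset.smul_sum]
    refine Finset.sum_congr rfl fun τ _ => ?_
    by_cases h : IsSimplex G i τ <;> simp [h]

/-- The submodule of `i`-cocycles. -/
noncomputable def cocycles (G : Set (Finset V)) (i : ℕ) : Submodule (ZMod 2) (Cochain G i) :=
  LinearMap.ker (coboundary G i)

/-- The submodule of `i`-coboundaries (`δ^{-1}` is the zero map). -/
noncomputable def coboundaries (G : Set (Finset V)) : (i : ℕ) → Submodule (ZMod 2) (Cochain G i)
  | 0 => ⊥
  | (i + 1) => LinearMap.range (coboundary G i)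

/-- The `i`-th cohomology group `H^i(G;F₂) = ker δ^i / im δ^{i-1}`. -/
noncomputable abbrev cohomology (G : Set (Finset V)) (i : ℕ) :=
  (cocycles G i) ⧸ ((coboundaries G i).comap (cocycles G i).subtype)

/-- `F₂`-cohomological `j`-connectedness: `H^0 ≅ F₂` and `H^i = 0` for `1 ≤ i ≤ j`. -/
def CohomConnected (G : Set (Finset V)) (j : ℕ) : Prop :=
  Nonempty (cohomology G 0 ≃ₗ[ZMod 2] ZMod 2) ∧
    ∀ i, 1 ≤ i → i ≤ j → Subsingleton (cohomology G i)

/-- The `j`-flower in `K` with centre `C`: the set of petals `C ∪ {w}`, `w ∈ K \ C`. -/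
def Flower [DecidableEq V] (K C : Finset V) : Set (Finset V) :=
  {P | ∃ w ∈ K \ C, P = insert w C}

/-- A copy of `M_j^-`: a `k`-simplex `K` together with a `(j-1)`-simplex `C ⊆ K` such that
each petal of the flower `F(K,C)` is contained in no `k`-simplex other than `K`. -/
def IsMjMinus [DecidableEq V] (G : Set (Finset V)) (k j : ℕ) (K C : Finset V) : Prop :=
  IsSimplex G k K ∧ C ∈ G ∧ C.card = j ∧ C ⊆ K ∧
    ∀ P ∈ Flower K C, ∀ K', IsSimplex G k K' → P ⊆ K' → K' = K

/-- A `j`-cycle: every `(j-1)`-simplex lies in an even number of members of `J`. -/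
def IsCycle (G : Set (Finset V)) (j : ℕ) (J : Finset (Finset V)) : Prop :=
  (∀ σ ∈ J, IsSimplex G j σ) ∧
    ∀ τ : Finset V, τ.card = j → Even (J.filter (fun σ => τ ⊆ σ)).card

/-- A copy of `M_j`. -/
def IsMj [DecidableEq V] (G : Set (Finset V)) (k j : ℕ) (K C : Finset V)
    (J : Finset (Finset V)) : Prop :=
  IsMjMinus G k j K C ∧ IsCycle G j J ∧ ∃! P : Finset V, P ∈ J ∧ P ∈ Flower K C

/-- A `j`-shell: a `(j+2)`-set all of whose `(j+1)`-subsets are `j`-simplices. -/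
def IsShell (G : Set (Finset V)) (j : ℕ) (A : Finset V) : Prop :=
  A.card = j + 2 ∧ ∀ τ ⊆ A, τ.card = j + 1 → τ ∈ G

/-- A copy of `M_j^*`. -/
def IsMjStar [DecidableEq V] (G : Set (Finset V)) (k j : ℕ) (K C : Finset V) (w a : V) : Prop :=
  IsMjMinus G k j K C ∧ w ∈ K \ C ∧ a ∉ K ∧ IsShell G j (insert a (insert w C))

/-- The support of a cochain. -/
def cochainSupport {G : Set (Finset V)} {i : ℕ} (f : Cochain G i) : Set (Finset V) :=
  {A | ∃ h : IsSimplex G i A, f ⟨A, h⟩ = 1}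

/-- A cochain arising from a copy of `M_j^-`: its support is the flower `F(K,C)`. -/
def ArisesFrom [DecidableEq V] (G : Set (Finset V)) (k j : ℕ) (f : Cochain G j)
    (K C : Finset V) : Prop :=
  IsMjMinus G k j K C ∧ cochainSupport f = Flower K C

/-- A `j`-cocycle generated by copies of `M_j^-`: it differs by a `j`-coboundary from a sum
of `j`-cocycles arising from copies of `M_j^-`. -/
def GeneratedByMjMinus [DecidableEq V] (G : Set (Finset V)) (k j : ℕ) (f : Cochain G j) : Prop :=
  ∃ (m : ℕ) (fs : Fin m → Cochain G j),
    (∀ i, ∃ K C, ArisesFrom G k j (fs i) K C) ∧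
      f - (∑ i, fs i) ∈ coboundaries G j

/-- Membership in `N_G`: a `j`-cocycle not generated by copies of `M_j^-`. -/
def InNG [DecidableEq V] (G : Set (Finset V)) (k j : ℕ) (f : Cochain G j) : Prop :=
  f ∈ cocycles G j ∧ ¬ GeneratedByMjMinus G k j f

/-- Traversability: the transitive closure of "lying in a common `k`-simplex" is `S × S`. -/
def Traversable (G : Set (Finset V)) (k : ℕ) (S : Set (Finset V)) : Prop :=
  ∀ σ₁ ∈ S, ∀ σ₂ ∈ S,
    Relation.TransGen
      (fun a b => a ∈ S ∧ b ∈ S ∧ ∃ K, IsSimplex G k K ∧ a ⊆ K ∧ b ⊆ K) σ₁ σ₂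

/-- A local obstacle: a `k`-simplex containing at least `k-j+1` many `j`-simplices,
each lying in no other `k`-simplex. -/
def IsLocalObstacle (G : Set (Finset V)) (k j : ℕ) (K : Finset V) : Prop :=
  IsSimplex G k K ∧
    k - j + 1 ≤ {σ : Finset V | IsSimplex G j σ ∧ σ ⊆ K ∧
      ∀ K', IsSimplex G k K' → σ ⊆ K' → K' = K}.ncard

/-- The random complex `G_p` given birth times `t`: all singletons together with all
non-empty subsets of `(k+1)`-sets with birth time at most `p`. -/
def complexAt (k n : ℕ) (t : Finset (Fin n) → ℝ) (p : ℝ) : Set (Finset (Fin n)) :=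
  {A | (∃ v, A = {v}) ∨
    (A.Nonempty ∧ ∃ K : Finset (Fin n), K.card = k + 1 ∧ t K ≤ p ∧ A ⊆ K)}

/-- The distribution of birth times: i.i.d. uniform on `[0,1]`. -/
noncomputable def birthMeasure (n : ℕ) : Measure (Finset (Fin n) → ℝ) :=
  Measure.pi fun _ => volume.restrict (Set.Icc (0 : ℝ) 1)

/-- `p_{M_j}`: the supremum of the probabilities `p ∈ [0,1]` at which `G_p` contains
a copy of `M_j`. -/
noncomputable def pMj (k j n : ℕ) (t : Finset (Fin n) → ℝ) : ℝ :=
  sSup {p : ℝ | p ∈ Set.Icc (0 : ℝ) 1 ∧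
    ∃ K C J, IsMj (complexAt k n t p) k j K C J}

/-- The threshold `p_j`. -/
noncomputable def pjThreshold (k j n : ℕ) : ℝ :=
  ((j + 1 : ℝ) * Real.log n + Real.log (Real.log n)) * (Nat.factorial (k - j)) /
    (((k - j + 1 : ℕ) : ℝ) * (n : ℝ) ^ (k - j))

/-- `p_j^-`. -/
noncomputable def pjMinus (k j n : ℕ) : ℝ :=
  (1 - 1 / Real.sqrt (Real.log n)) * ((j + 1 : ℝ) * Real.log n) * (Nat.factorial (k - j)) /
    (((k - j + 1 : ℕ) : ℝ) * (n : ℝ) ^ (k - j))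

/-- `p_{j-1}^-`. -/
noncomputable def pjPrevMinus (k j n : ℕ) : ℝ :=
  (1 - 1 / Real.sqrt (Real.log n)) * ((j : ℝ) * Real.log n) * (Nat.factorial (k - j + 1)) /
    (((k - j + 2 : ℕ) : ℝ) * (n : ℝ) ^ (k - j + 1))

/-- `p_j^{(1)}`. -/
noncomputable def pjOne (k j n : ℕ) : ℝ :=
  1 / (10 * ((j : ℝ) + 1) * (Nat.choose (k + 1) (j + 1)) * (n : ℝ) ^ (k - j))

/-- The number of copies of `M_j^-` in `G`. -/
noncomputable def countMjMinus (k j : ℕ) {n : ℕ} (G : Set (Finset (Fin n))) : ℕ :=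
  {x : Finset (Fin n) × Finset (Fin n) | IsMjMinus G k j x.1 x.2}.ncard

/-- The number of copies of `M_j^*` in `G`. -/
noncomputable def countMjStar (k j : ℕ) {n : ℕ} (G : Set (Finset (Fin n))) : ℕ :=
  {x : Finset (Fin n) × Finset (Fin n) × Fin n × Fin n |
    IsMjStar G k j x.1 x.2.1 x.2.2.1 x.2.2.2}.ncard

/-- The expected number of copies of `M_j^*` in `G_p` at `p = p_{j-1}^-`. -/
noncomputable def expectStar (k j n : ℕ) : ℝ :=
  ∫ t, (countMjStar k j (complexAt k n t (pjPrevMinus k j n)) : ℝ) ∂(birthMeasure n)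


/-! ### Configurations -/

/-- The vertex set of the shell. -/
noncomputable def shellSet {n : ℕ} (τ : Finset (Fin n) × Fin n × Fin n) : Finset (Fin n) :=
  insert τ.2.2 (insert τ.2.1 τ.1)

/-- Admissible triples `(C, w, a)`. -/
noncomputable def trips (j n : ℕ) : Finset (Finset (Fin n) × Fin n × Fin n) :=
  Finset.univ.filter fun τ => τ.1.card = j ∧ τ.2.1 ∉ τ.1 ∧ τ.2.2 ∉ insert τ.2.1 τ.1

/-- `k`-simplices containing `A` minus `u`, but not `u`. -/
noncomputable def Lset (k : ℕ) {n : ℕ} (A : Finset (Fin n)) (u : Fin n) :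
    Finset (Finset (Fin n)) :=
  Finset.univ.filter fun e => e.card = k + 1 ∧ A.erase u ⊆ e ∧ u ∉ e

/-- Assignments of `k`-simplices to the vertices of the shell. -/
noncomputable def Gset (k : ℕ) {n : ℕ} (A : Finset (Fin n)) :
    Finset (Fin n → Finset (Fin n)) :=
  Fintype.piFinset fun u => if u ∈ A then Lset k A u else {∅}

/-- The type of configurations. -/
abbrev Cf (n : ℕ) := Σ _ : Finset (Fin n) × Fin n × Fin n, (Fin n → Finset (Fin n))

/-- All configurations. -/
noncomputable def cfgAll (k j n : ℕ) : Finset (Cf n) :=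
  (trips j n).sigma fun τ => Gset k (shellSet τ)

/-- Configurations without forced additional simplices. -/
noncomputable def cfg (k j n : ℕ) : Finset (Cf n) :=
  (cfgAll k j n).filter fun x => x.2 x.1.2.1 ∩ x.2 x.1.2.2 ⊆ x.1.1

/-- The simplices of a configuration. -/
noncomputable def sims {n : ℕ} (x : Cf n) : Finset (Finset (Fin n)) :=
  (shellSet x.1).image x.2

/-- The `k`-simplices of the random complex. -/
noncomputable def tops (k n : ℕ) (t : Finset (Fin n) → ℝ) (p : ℝ) : Finset (Finset (Fin n)) :=
  Finset.univ.filter fun K => K.card = k + 1 ∧ t K ≤ p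

/-- The simplices which have to be absent. -/
noncomputable def bad (k : ℕ) {n : ℕ} (x : Cf n) : Finset (Finset (Fin n)) :=
  Finset.univ.filter fun e => e.card = k + 1 ∧ e ∉ sims x ∧
    ((∃ u ∈ shellSet x.1, (shellSet x.1).erase u ⊆ e) ∨
      ∃ w' ∈ x.2 x.1.2.2 \ x.1.1, insert w' x.1.1 ⊆ e)

lemma mem_tops {k n : ℕ} {t : Finset (Fin n) → ℝ} {p : ℝ} {K : Finset (Fin n)} :
    K ∈ tops k n t p ↔ K.card = k + 1 ∧ t K ≤ p := by simp [tops]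

lemma isSimplex_iff {k n : ℕ} (hk : 1 ≤ k) {t : Finset (Fin n) → ℝ} {p : ℝ} {K : Finset (Fin n)} :
    IsSimplex (complexAt k n t p) k K ↔ K ∈ tops k n t p := by
  rw [mem_tops]
  constructor
  · rintro ⟨h, hc⟩
    rcases h with ⟨v, rfl⟩ | ⟨_, K', hK', ht, hs⟩
    · simp at hc; omega
    · have : K = K' := Finset.eq_of_subset_of_card_le hs (by omega)
      subst this
      exact ⟨hc, ht⟩
  · rintro ⟨hc, ht⟩
    exact ⟨Or.inr ⟨Finset.card_pos.1 (by omega), K, hc, ht, subset_rfl⟩, hc⟩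

lemma mem_complex_of {k n : ℕ} {t : Finset (Fin n) → ℝ} {p : ℝ} {A K : Finset (Fin n)}
    (hA : A.Nonempty) (hK : K ∈ tops k n t p) (h : A ⊆ K) : A ∈ complexAt k n t p :=
  Or.inr ⟨hA, K, (mem_tops.1 hK).1, (mem_tops.1 hK).2, h⟩

lemma exists_of_mem_complex {k n : ℕ} {t : Finset (Fin n) → ℝ} {p : ℝ} {A : Finset (Fin n)}
    (h : A ∈ complexAt k n t p) (hA : 2 ≤ A.card) : ∃ K ∈ tops k n t p, A ⊆ K := by
  rcases h with ⟨v, rfl⟩ | ⟨_, K', hK', ht, hs⟩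
  · simp at hA
  · exact ⟨K', mem_tops.2 ⟨hK', ht⟩, hs⟩

lemma mem_trips {j n : ℕ} {τ : Finset (Fin n) × Fin n × Fin n} :
    τ ∈ trips j n ↔ τ.1.card = j ∧ τ.2.1 ∉ τ.1 ∧ τ.2.2 ∉ insert τ.2.1 τ.1 := by simp [trips]

lemma card_shellSet {j n : ℕ} {τ : Finset (Fin n) × Fin n × Fin n} (h : τ ∈ trips j n) :
    (shellSet τ).card = j + 2 := by
  rw [mem_trips] at h
  rw [shellSet, Finset.card_insert_of_notMem h.2.2, Finset.card_insert_of_notMem h.2.1, h.1]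

lemma mem_Lset {k n : ℕ} {A : Finset (Fin n)} {u : Fin n} {e : Finset (Fin n)} :
    e ∈ Lset k A u ↔ e.card = k + 1 ∧ A.erase u ⊆ e ∧ u ∉ e := by simp [Lset]

lemma mem_Gset {k n : ℕ} {A : Finset (Fin n)} {g : Fin n → Finset (Fin n)} :
    g ∈ Gset k A ↔ (∀ u ∈ A, g u ∈ Lset k A u) ∧ ∀ u ∉ A, g u = ∅ := by
  rw [Gset, Fintype.mem_piFinset]
  constructor
  · intro h
    refine ⟨fun u hu => ?_, fun u hu => ?_⟩
    · simpa [hu] using h u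
    · simpa [hu] using h u
  · rintro ⟨h1, h2⟩ u
    by_cases hu : u ∈ A
    · simpa [hu] using h1 u hu
    · simpa [hu] using h2 u hu

lemma mem_cfgAll {k j n : ℕ} {x : Cf n} :
    x ∈ cfgAll k j n ↔ x.1 ∈ trips j n ∧ x.2 ∈ Gset k (shellSet x.1) := by
  simp [cfgAll]

lemma mem_cfg {k j n : ℕ} {x : Cf n} :
    x ∈ cfg k j n ↔ x ∈ cfgAll k j n ∧ x.2 x.1.2.1 ∩ x.2 x.1.2.2 ⊆ x.1.1 := by
  simp [cfg]

lemma Gset_injOn {k n : ℕ} {A : Finset (Fin n)} {g : Fin n → Finset (Fin n)}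
    (hg : g ∈ Gset k A) : Set.InjOn g A := by
  intro u hu v hv huv
  by_contra hne
  have h1 := mem_Lset.1 ((mem_Gset.1 hg).1 u hu)
  have h2 := mem_Lset.1 ((mem_Gset.1 hg).1 v hv)
  apply h1.2.2
  rw [huv]
  exact h2.2.1 (Finset.mem_erase.2 ⟨hne, hu⟩)

lemma card_sims {k j n : ℕ} {x : Cf n} (hx : x ∈ cfgAll k j n) : (sims x).card = j + 2 := by
  rw [mem_cfgAll] at hx
  rw [sims, Finset.card_image_of_injOn (Gset_injOn hx.2), card_shellSet hx.1]

lemma card_of_mem_sims {k j n : ℕ} {x : Cf n} (hx : x ∈ cfgAll k j n) {e : Finset (Fin n)}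
    (he : e ∈ sims x) : e.card = k + 1 := by
  rw [mem_cfgAll] at hx
  obtain ⟨u, hu, rfl⟩ := Finset.mem_image.1 he
  exact (mem_Lset.1 ((mem_Gset.1 hx.2).1 u hu)).1

/-- The projection of a configuration to the corresponding copy of `M_j^*`. -/
def proj {n : ℕ} (x : Cf n) : Finset (Fin n) × Finset (Fin n) × Fin n × Fin n :=
  (x.2 x.1.2.2, x.1.1, x.1.2.1, x.1.2.2)

lemma count_le {k j n : ℕ} (hj : 1 ≤ j) (hjk : j < k) (t : Finset (Fin n) → ℝ) (p : ℝ) :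
    countMjStar k j (complexAt k n t p) ≤
      ((cfg k j n).filter fun x => sims x ⊆ tops k n t p).card := by
  have hsub : {x : Finset (Fin n) × Finset (Fin n) × Fin n × Fin n |
      IsMjStar (complexAt k n t p) k j x.1 x.2.1 x.2.2.1 x.2.2.2} ⊆
      ((((cfg k j n).filter fun x => sims x ⊆ tops k n t p).image proj : Finset _) : Set _) := by
    rintro ⟨K, C, w, a⟩ ⟨⟨hK, hC, hCc, hCK, hiso⟩, hw, ha, hAc, hsh⟩
    simp only at hK hC hCc hCK hiso hw ha hAc hsh
    rw [isSimplex_iff (by omega)] at hK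
    rw [Finset.mem_sdiff] at hw
    have hwC : insert w C ⊆ K := Finset.insert_subset hw.1 hCK
    have hτ : ((C, w, a) : Finset (Fin n) × Fin n × Fin n) ∈ trips j n :=
      mem_trips.2 ⟨hCc, hw.2, fun h => ha (hwC h)⟩
    set A := shellSet (C, w, a) with hA
    have hAdef : A = insert a (insert w C) := rfl
    have haA : a ∈ A := by simp [hAdef]
    have hex : ∀ u : Fin n, ∃ e, (u ∈ A → (e ∈ tops k n t p ∧ A.erase u ⊆ e ∧ (u = a → e = K))) ∧
        (u ∉ A → e = ∅) := by
      intro u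
      by_cases hu : u ∈ A
      · by_cases hua : u = a
        · refine ⟨K, fun _ => ⟨hK, ?_, fun _ => rfl⟩, fun h => absurd hu h⟩
          subst hua
          rw [hAdef]
          intro y hy
          rw [Finset.mem_erase, Finset.mem_insert] at hy
          exact hwC (hy.2.resolve_left hy.1)
        · have hc : (A.erase u).card = j + 1 := by
            rw [Finset.card_erase_of_mem hu, card_shellSet hτ]; omega
          obtain ⟨e, he, hs⟩ := exists_of_mem_complex
            (hsh (A.erase u) (Finset.erase_subset _ _) hc) (by omega)
          exact ⟨e, fun _ => ⟨he, hs, fun h => absurd h hua⟩, fun h => absurd hu h⟩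
      · exact ⟨∅, fun h => absurd h hu, fun _ => rfl⟩
    choose g hg1 hg2 using hex
    have hga : g a = K := (hg1 a haA).2.2 rfl
    have hnp : ∀ u ∈ A, u ≠ a → ∀ w' ∈ K \ C, ¬ insert w' C ⊆ g u := by
      intro u hu hua w' hw' hs
      have h1 := hiso (insert w' C) ⟨w', hw', rfl⟩ (g u)
        ((isSimplex_iff (by omega)).2 (hg1 u hu).1) hs
      apply ha
      rw [← h1]
      exact (hg1 u hu).2.1 (Finset.mem_erase.2 ⟨Ne.symm hua, haA⟩)
    have hwA : w ∈ A := by simp [hAdef]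
    have hCA : C ⊆ A := fun y hy => by simp [hAdef, hy]
    have hwa : w ≠ a := fun h => ha (h ▸ hw.1)
    rw [Finset.mem_coe, Finset.mem_image]
    refine ⟨⟨(C, w, a), g⟩, ?_, ?_⟩
    · rw [Finset.mem_filter, mem_cfg, mem_cfgAll]
      refine ⟨⟨⟨hτ, mem_Gset.2 ⟨fun u hu => ?_, hg2⟩⟩, ?_⟩, ?_⟩
      · refine mem_Lset.2 ⟨(mem_tops.1 (hg1 u hu).1).1, (hg1 u hu).2.1, fun hm => ?_⟩
        by_cases hua : u = a
        · subst hua; change u ∈ g u at hm; rw [hga] at hm; exact ha hm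
        · refine hnp u hu hua w (Finset.mem_sdiff.2 hw) fun y hy => ?_
          by_cases hyu : y = u
          · rw [hyu]; exact hm
          · exact (hg1 u hu).2.1 (Finset.mem_erase.2 ⟨hyu, by rw [hAdef]; exact Finset.mem_insert_of_mem hy⟩)
      · intro w' hw'
        simp only [Finset.mem_inter] at hw'
        rw [hga] at hw'
        by_contra hc
        refine hnp w hwA hwa w' (Finset.mem_sdiff.2 ⟨hw'.2, hc⟩) ?_
        refine Finset.insert_subset hw'.1 fun y hy => (hg1 w hwA).2.1
          (Finset.mem_erase.2 ⟨fun h => hw.2 (h ▸ hy), hCA hy⟩)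
      · intro e he
        obtain ⟨u, hu, rfl⟩ := Finset.mem_image.1 he
        exact (hg1 u hu).1
    · simp [proj, hga]
  calc countMjStar k j (complexAt k n t p) ≤ _ := Set.ncard_le_ncard hsub (Finset.finite_toSet _)
    _ ≤ _ := by rw [Set.ncard_coe_finset]; exact Finset.card_image_le

lemma le_count {k j n : ℕ} (hj : 1 ≤ j) (hjk : j < k) (t : Finset (Fin n) → ℝ) (p : ℝ) :
    ((cfg k j n).filter fun x => sims x ⊆ tops k n t p ∧ ∀ e ∈ bad k x, e ∉ tops k n t p).card ≤
      countMjStar k j (complexAt k n t p) := by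
  rw [countMjStar, ← Set.ncard_coe_finset]
  refine Set.ncard_le_ncard_of_injOn proj ?_ ?_ (Set.toFinite _)
  · rintro ⟨⟨C, w, a⟩, g⟩ hx
    rw [Finset.mem_coe, Finset.mem_filter, mem_cfg, mem_cfgAll] at hx
    obtain ⟨⟨⟨hτ, hg⟩, hwa⟩, hS, hbad⟩ := hx
    simp only at hτ hg hwa
    have hτ' := mem_trips.1 hτ
    simp only at hτ'
    set A := shellSet (C, w, a) with hA
    have hAdef : A = insert a (insert w C) := rfl
    have haA : a ∈ A := by simp [hAdef]
    have hwA : w ∈ A := by simp [hAdef]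
    have hCA : C ⊆ A := fun y hy => by simp [hAdef, hy]
    have hgm : ∀ u ∈ A, g u ∈ tops k n t p := fun u hu => hS (Finset.mem_image_of_mem g hu)
    have hgL : ∀ u ∈ A, A.erase u ⊆ g u ∧ u ∉ g u := fun u hu =>
      (mem_Lset.1 ((mem_Gset.1 hg).1 u hu)).2
    have haC : a ∉ C := fun h => hτ'.2.2 (Finset.mem_insert_of_mem h)
    have hane : w ≠ a := fun h => hτ'.2.2 (h ▸ Finset.mem_insert_self _ _)
    have hCga : C ⊆ g a := fun y hy =>
      (hgL a haA).1 (Finset.mem_erase.2 ⟨fun h => haC (h ▸ hy), hCA hy⟩)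
    have hcover : ∀ u ∈ A, ∀ τ : Finset (Fin n), τ.Nonempty → τ ⊆ A.erase u →
        τ ∈ complexAt k n t p := fun u hu τ hne hs =>
      mem_complex_of hne (hgm u hu) (hs.trans (hgL u hu).1)
    refine ⟨⟨(isSimplex_iff (by omega)).2 (hgm a haA), ?_, hτ'.1, hCga, ?_⟩, ?_, ?_, ?_, ?_⟩
    · exact mem_complex_of (Finset.card_pos.1 (by rw [show (proj ⟨(C, w, a), g⟩).2.1 = C from rfl, hτ'.1]; omega)) (hgm a haA) hCga
    · rintro P ⟨w', hw', rfl⟩ e he hs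
      simp only [proj] at hw' hs ⊢
      rw [isSimplex_iff (by omega)] at he
      have heS : e ∈ sims (⟨(C, w, a), g⟩ : Cf n) := by
        by_contra hne
        refine hbad e ?_ he
        rw [bad, Finset.mem_filter]
        exact ⟨Finset.mem_univ _, (mem_tops.1 he).1, hne, Or.inr ⟨w', hw', hs⟩⟩
      obtain ⟨u, hu, rfl⟩ := Finset.mem_image.1 heS
      simp only at hu hs ⊢
      have hu' : u = a ∨ u = w ∨ u ∈ C := by
        simpa [shellSet] using hu
      rw [Finset.mem_sdiff] at hw'
      rcases hu' with rfl | rfl | huC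
      · rfl
      · exact absurd (hwa (Finset.mem_inter.2 ⟨hs (Finset.mem_insert_self _ _), hw'.1⟩)) hw'.2
      · exact absurd (hs (Finset.mem_insert_of_mem huC)) (hgL u hu).2
    · simp only [proj, Finset.mem_sdiff]
      exact ⟨(hgL a haA).1 (Finset.mem_erase.2 ⟨hane, hwA⟩), hτ'.2.1⟩
    · exact (hgL a haA).2
    · exact card_shellSet hτ
    · intro σ hσ hc
      change σ ⊆ A at hσ
      have : ∃ u ∈ A, u ∉ σ := by
        by_contra hcon
        push Not at hcon
        have := Finset.card_le_card (show A ⊆ σ from hcon)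
        rw [card_shellSet hτ] at this
        omega
      obtain ⟨u, hu, huσ⟩ := this
      exact hcover u hu σ (Finset.card_pos.1 (by omega)) fun y hy =>
        Finset.mem_erase.2 ⟨fun h => huσ (h ▸ hy), hσ hy⟩
  · rintro ⟨⟨C, w, a⟩, g⟩ hx ⟨⟨C', w', a'⟩, g'⟩ hx' heq
    simp only [proj, Prod.mk.injEq] at heq
    obtain ⟨hga, rfl, rfl, rfl⟩ := heq
    rw [Finset.mem_coe, Finset.mem_filter, mem_cfg, mem_cfgAll] at hx hx'
    obtain ⟨⟨⟨hτ, hg⟩, hwa⟩, hS, hbad⟩ := hx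
    obtain ⟨⟨⟨-, hg'⟩, hwa'⟩, hS', hbad'⟩ := hx'
    simp only at hτ hg hwa hg' hwa'
    have : g = g' := by
      funext v
      by_cases hv : v ∈ shellSet (C, w, a)
      · have h1 := mem_Lset.1 ((mem_Gset.1 hg').1 v hv)
        have h2 : g' v ∈ tops k n t p := hS' (Finset.mem_image_of_mem g' hv)
        have heS : g' v ∈ sims (⟨(C, w, a), g⟩ : Cf n) := by
          by_contra hne
          refine hbad (g' v) ?_ h2
          rw [bad, Finset.mem_filter]
          exact ⟨Finset.mem_univ _, h1.1, hne, Or.inl ⟨v, hv, h1.2.1⟩⟩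
        obtain ⟨u, hu, hgu⟩ := Finset.mem_image.1 heS
        simp only at hu hgu
        have huv : v = u := by
          by_contra hne
          apply h1.2.2
          rw [← hgu]
          exact (mem_Lset.1 ((mem_Gset.1 hg).1 u hu)).2.1 (Finset.mem_erase.2 ⟨hne, hv⟩)
        rw [← hgu, ← huv]
      · rw [(mem_Gset.1 hg).2 v hv, (mem_Gset.1 hg').2 v hv]
    rw [this]

/-! ### Counting -/

lemma card_supersets {k j n : ℕ} (hjk : j < k) {σ : Finset (Fin n)} (hσ : σ.card = j + 1) :
    (Finset.univ.filter fun e : Finset (Fin n) => e.card = k + 1 ∧ σ ⊆ e).card ≤ n ^ (k - j) := by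
  calc _ ≤ (Finset.powersetCard (k - j) (Finset.univ : Finset (Fin n))).card := by
        refine Finset.card_le_card_of_injOn (fun e => e \ σ) ?_ ?_
        · intro e he
          rw [Finset.mem_coe, Finset.mem_filter] at he
          rw [Finset.mem_coe, Finset.mem_powersetCard]
          refine ⟨Finset.subset_univ _, ?_⟩
          rw [Finset.card_sdiff_of_subset he.2.2, he.2.1, hσ]
          omega
        · intro e he e' he' h
          rw [Finset.mem_coe, Finset.mem_filter] at he he'
          simp only at h
          rw [← Finset.sdiff_union_of_subset he.2.2, h, Finset.sdiff_union_of_subset he'.2.2]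
    _ = n.choose (k - j) := by simp
    _ ≤ _ := Nat.choose_le_pow _ _

lemma card_erase_shell {j n : ℕ} {τ : Finset (Fin n) × Fin n × Fin n} (h : τ ∈ trips j n)
    {u : Fin n} (hu : u ∈ shellSet τ) : ((shellSet τ).erase u).card = j + 1 := by
  rw [Finset.card_erase_of_mem hu, card_shellSet h]; omega

lemma card_Lset {k j n : ℕ} (hjk : j < k) {τ : Finset (Fin n) × Fin n × Fin n} (h : τ ∈ trips j n)
    {u : Fin n} (hu : u ∈ shellSet τ) : (Lset k (shellSet τ) u).card ≤ n ^ (k - j) := by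
  refine le_trans (Finset.card_le_card ?_) (card_supersets hjk (card_erase_shell h hu))
  intro e he
  rw [mem_Lset] at he
  simp [he.1, he.2.1]

lemma card_bad {k j n : ℕ} (hjk : j < k) {x : Cf n} (hx : x ∈ cfgAll k j n) :
    (bad k x).card ≤ (j + k + 3) * n ^ (k - j) := by
  have hx' := mem_cfgAll.1 hx
  set A := shellSet x.1 with hA
  set C := x.1.1 with hC
  set K := x.2 x.1.2.2 with hK
  have haA : x.1.2.2 ∈ A := by simp [hA, shellSet]
  have hKL := mem_Lset.1 ((mem_Gset.1 hx'.2).1 _ haA)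
  set P : Finset (Finset (Fin n)) := A.image (fun u => A.erase u) ∪
    (K \ C).image (fun w => insert w C) with hP
  have hPc : P.card ≤ j + k + 3 := by
    calc P.card ≤ _ := Finset.card_union_le _ _
      _ ≤ A.card + (K \ C).card := add_le_add Finset.card_image_le Finset.card_image_le
      _ ≤ (j + 2) + (k + 1) := by
          refine add_le_add (card_shellSet hx'.1).le ?_
          exact (Finset.card_le_card Finset.sdiff_subset).trans hKL.1.le
      _ = _ := by ring
  have hPj : ∀ σ ∈ P, σ.card = j + 1 := by
    intro σ hσ
    rw [hP, Finset.mem_union, Finset.mem_image, Finset.mem_image] at hσ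
    rcases hσ with ⟨u, hu, rfl⟩ | ⟨w, hw, rfl⟩
    · exact card_erase_shell hx'.1 hu
    · rw [Finset.card_insert_of_notMem (Finset.mem_sdiff.1 hw).2, (mem_trips.1 hx'.1).1]
  calc (bad k x).card ≤ (P.biUnion fun σ =>
        (Finset.univ.filter fun e : Finset (Fin n) => e.card = k + 1 ∧ σ ⊆ e)).card := by
        refine Finset.card_le_card fun e he => ?_
        rw [bad, Finset.mem_filter] at he
        rw [Finset.mem_biUnion]
        rcases he.2.2.2 with ⟨u, hu, hs⟩ | ⟨w, hw, hs⟩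
        · refine ⟨A.erase u, ?_, ?_⟩
          · rw [hP]; exact Finset.mem_union_left _ (Finset.mem_image_of_mem _ hu)
          · simp only [Finset.mem_filter, Finset.mem_univ, true_and]
            exact ⟨he.2.1, hs⟩
        · refine ⟨insert w C, ?_, ?_⟩
          · rw [hP]; exact Finset.mem_union_right _ (Finset.mem_image.2 ⟨w, hw, rfl⟩)
          · simp only [Finset.mem_filter, Finset.mem_univ, true_and]
            exact ⟨he.2.1, hs⟩
    _ ≤ P.card * n ^ (k - j) :=
        Finset.card_biUnion_le_card_mul _ _ _ fun σ hσ => card_supersets hjk (hPj σ hσ)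
    _ ≤ _ := Nat.mul_le_mul_right _ hPc

lemma prod_Gset {k n : ℕ} (A : Finset (Fin n)) (f : Finset (Fin n) → ℝ) :
    ∑ g ∈ Gset k A, ∏ u ∈ A, f (g u) = ∏ u ∈ A, ∑ e ∈ Lset k A u, f e := by
  have h1 : ∀ g : Fin n → Finset (Fin n), ∏ u ∈ A, f (g u) = ∏ u, if u ∈ A then f (g u) else 1 := by
    intro g
    rw [Finset.prod_ite_mem, Finset.univ_inter]
  have h2 : ∏ u ∈ A, ∑ e ∈ Lset k A u, f e =
      ∏ u, ∑ e ∈ (if u ∈ A then Lset k A u else {∅}), (if u ∈ A then f e else 1) := by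
    rw [← Finset.univ_inter A, ← Finset.prod_ite_mem]
    refine Finset.prod_congr rfl fun u _ => ?_
    by_cases hu : u ∈ A <;> simp [hu]
  rw [h2, Finset.prod_univ_sum]
  refine Finset.sum_congr ?_ fun g _ => h1 g
  unfold Gset
  congr!

lemma card_trips {j n : ℕ} : (trips j n).card ≤ n ^ (j + 2) := by
  calc (trips j n).card ≤ (Finset.powersetCard j (Finset.univ : Finset (Fin n)) ×ˢ
        ((Finset.univ : Finset (Fin n)) ×ˢ (Finset.univ : Finset (Fin n)))).card := by
        refine Finset.card_le_card fun τ hτ => ?_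
        rw [mem_trips] at hτ
        simp [hτ.1]
    _ = n.choose j * (n * n) := by simp [Finset.card_product]
    _ ≤ n ^ j * (n * n) := Nat.mul_le_mul_right _ (Nat.choose_le_pow _ _)
    _ = _ := by ring

lemma card_cfg_le {k j n : ℕ} (hjk : j < k) :
    ((cfg k j n).card : ℝ) ≤ ((n : ℝ) ^ (k - j + 1)) ^ (j + 2) := by
  have h1 : (cfg k j n).card ≤ (cfgAll k j n).card := Finset.card_le_card (Finset.filter_subset _ _)
  have h2 : (cfgAll k j n).card ≤ (trips j n).card * (n ^ (k - j)) ^ (j + 2) := by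
    rw [cfgAll, Finset.card_sigma]
    refine Finset.sum_le_card_nsmul _ _ _ fun τ hτ => ?_
    have h3 := prod_Gset (k := k) (shellSet τ) (fun _ => 1)
    simp only [Finset.prod_const_one, Finset.sum_const, nsmul_eq_mul, mul_one] at h3
    have h4 : (Gset k (shellSet τ)).card = ∏ u ∈ shellSet τ, (Lset k (shellSet τ) u).card := by
      exact_mod_cast h3
    rw [h4, ← card_shellSet hτ]
    exact Finset.prod_le_pow_card _ _ _ fun u hu => card_Lset hjk hτ hu
  have h5 : (cfg k j n).card ≤ (n ^ (k - j + 1)) ^ (j + 2) := by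
    calc _ ≤ (trips j n).card * (n ^ (k - j)) ^ (j + 2) := h1.trans h2
      _ ≤ n ^ (j + 2) * (n ^ (k - j)) ^ (j + 2) := Nat.mul_le_mul_right _ card_trips
      _ = _ := by rw [← mul_pow, mul_comm n, ← pow_succ]
  exact_mod_cast h5

/-- Disjoint pools of vertices. -/
lemma exists_pools (n : ℕ) : ∃ P : Fin 5 → Finset (Fin n),
    (∀ i, (P i).card = n / 5) ∧ ∀ i i', i ≠ i' → Disjoint (P i) (P i') := by
  have hb : ∀ (i : Fin 5) (x : Fin (n / 5)), (i : ℕ) * (n / 5) + x < n := by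
    intro i x
    have h1 := i.2
    have h2 := x.2
    have h3 : (i : ℕ) * (n / 5) ≤ 4 * (n / 5) := Nat.mul_le_mul_right _ (by omega)
    omega
  refine ⟨fun i => Finset.univ.image fun x : Fin (n / 5) => (⟨i * (n / 5) + x, hb i x⟩ : Fin n),
    fun i => ?_, fun i i' hne => ?_⟩
  · rw [Finset.card_image_of_injective]
    · simp
    · intro x y h
      simp only [Fin.mk.injEq] at h
      exact Fin.ext (by omega)
  · rw [Finset.disjoint_left]
    intro y hy hy'
    obtain ⟨x, -, rfl⟩ := Finset.mem_image.1 hy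
    obtain ⟨x', -, h⟩ := Finset.mem_image.1 hy'
    simp only [Fin.mk.injEq] at h
    apply hne
    have hx := x.2
    have hx' := x'.2
    apply Fin.ext
    rcases lt_trichotomy (i : ℕ) i' with hlt | heq | hgt
    · have : ((i : ℕ) + 1) * (n / 5) ≤ i' * (n / 5) := Nat.mul_le_mul_right _ hlt
      rw [add_mul] at this
      omega
    · exact heq
    · have : ((i' : ℕ) + 1) * (n / 5) ≤ i * (n / 5) := Nat.mul_le_mul_right _ hgt
      rw [add_mul] at this
      omega

lemma le_card_cfg {k j n : ℕ} (hjk : j < k) :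
    (n / 5).choose j * (n / 5) * (n / 5) * ((n / 5).choose (k - j)) ^ (j + 2) ≤
      (cfg k j n).card := by
  obtain ⟨P, hPc, hPd⟩ := exists_pools n
  set T := Finset.powersetCard j (P 0) ×ˢ (P 1 ×ˢ P 2) with hT
  have hdis : ∀ i i', i ≠ i' → ∀ x ∈ P i, x ∉ P i' := fun i i' h x hx hx' =>
    Finset.disjoint_left.1 (hPd i i' h) hx hx'
  have hmT : ∀ τ ∈ T, τ.1 ⊆ P 0 ∧ τ.1.card = j ∧ τ.2.1 ∈ P 1 ∧ τ.2.2 ∈ P 2 := by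
    intro τ hτ
    rw [hT, Finset.mem_product, Finset.mem_product, Finset.mem_powersetCard] at hτ
    exact ⟨hτ.1.1, hτ.1.2, hτ.2.1, hτ.2.2⟩
  have hTt : ∀ τ ∈ T, τ ∈ trips j n := by
    intro τ hτ
    obtain ⟨h1, h2, h3, h4⟩ := hmT τ hτ
    refine mem_trips.2 ⟨h2, fun h => hdis 0 1 (by decide) _ (h1 h) h3, fun h => ?_⟩
    rcases Finset.mem_insert.1 h with h | h
    · rw [h] at h4; exact hdis 1 2 (by decide) _ h3 h4
    · exact hdis 0 2 (by decide) _ (h1 h) h4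
  -- pools for the additional vertices
  let pl : Finset (Fin n) × Fin n × Fin n → Fin n → Finset (Fin n) :=
    fun τ u => if u = τ.2.2 then P 3 else P 4
  have hplc : ∀ τ u, (pl τ u).card = n / 5 := by
    intro τ u; simp only [pl]; split_ifs <;> exact hPc _
  have hplA : ∀ τ ∈ T, ∀ u, ∀ y ∈ pl τ u, y ∉ shellSet τ := by
    intro τ hτ u y hy hyA
    obtain ⟨h1, h2, h3, h4⟩ := hmT τ hτ
    have h5 : y ∈ P 3 ∨ y ∈ P 4 := by
      simp only [pl] at hy
      split_ifs at hy
      · exact Or.inl hy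
      · exact Or.inr hy
    have h6 : y ∈ P 0 ∨ y ∈ P 1 ∨ y ∈ P 2 := by
      simp only [shellSet, Finset.mem_insert] at hyA
      rcases hyA with rfl | rfl | h
      · exact Or.inr (Or.inr h4)
      · exact Or.inr (Or.inl h3)
      · exact Or.inl (h1 h)
    rcases h5 with h5 | h5 <;> rcases h6 with h6 | h6 | h6 <;>
      exact hdis _ _ (by decide) _ h5 h6
  let L' : Finset (Fin n) × Fin n × Fin n → Fin n → Finset (Finset (Fin n)) := fun τ u =>
    (Finset.powersetCard (k - j) (pl τ u)).image fun X => (shellSet τ).erase u ∪ X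
  have hL'c : ∀ τ ∈ T, ∀ u, (L' τ u).card = (n / 5).choose (k - j) := by
    intro τ hτ u
    simp only [L']
    rw [Finset.card_image_of_injOn, Finset.card_powersetCard, hplc]
    intro X hX Y hY h
    rw [Finset.mem_coe, Finset.mem_powersetCard] at hX hY
    have hd : ∀ Z, Z ⊆ pl τ u → Disjoint Z ((shellSet τ).erase u) := fun Z hZ =>
      Finset.disjoint_left.2 fun y hy hy' =>
        hplA τ hτ u y (hZ hy) (Finset.mem_of_mem_erase hy')
    have h1 := Finset.union_sdiff_cancel_left (hd X hX.1).symm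
    have h2 := Finset.union_sdiff_cancel_left (hd Y hY.1).symm
    simp only at h
    rw [← h1, h, h2]
  let G' : Finset (Fin n) × Fin n × Fin n → Finset (Fin n → Finset (Fin n)) := fun τ =>
    Fintype.piFinset fun u => if u ∈ shellSet τ then L' τ u else {∅}
  have hG'c : ∀ τ ∈ T, (G' τ).card = ((n / 5).choose (k - j)) ^ (j + 2) := by
    intro τ hτ
    simp only [G']
    rw [Fintype.card_piFinset]
    have : ∀ u, (if u ∈ shellSet τ then L' τ u else {∅}).card =
        if u ∈ shellSet τ then (n / 5).choose (k - j) else 1 := by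
      intro u
      split_ifs
      · exact hL'c τ hτ u
      · simp
    rw [Finset.prod_congr rfl fun u _ => this u, Finset.prod_ite_mem, Finset.univ_inter,
      Finset.prod_const, card_shellSet (hTt τ hτ)]
  have hsub : T.sigma G' ⊆ cfg k j n := by
    rintro ⟨τ, g⟩ hx
    rw [Finset.mem_sigma] at hx
    obtain ⟨hτ, hg⟩ := hx
    simp only at hτ hg
    have hg1 : ∀ u ∈ shellSet τ, ∃ X, X ⊆ pl τ u ∧ X.card = k - j ∧
        g u = (shellSet τ).erase u ∪ X := by
      intro u hu
      have := Fintype.mem_piFinset.1 hg u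
      rw [if_pos hu] at this
      obtain ⟨X, hX, hgu⟩ := Finset.mem_image.1 this
      rw [Finset.mem_powersetCard] at hX
      exact ⟨X, hX.1, hX.2, hgu.symm⟩
    have hg2 : ∀ u ∉ shellSet τ, g u = ∅ := by
      intro u hu
      have := Fintype.mem_piFinset.1 hg u
      rw [if_neg hu] at this
      simpa using this
    obtain ⟨h1, h2, h3, h4⟩ := hmT τ hτ
    rw [mem_cfg, mem_cfgAll]
    refine ⟨⟨hTt τ hτ, mem_Gset.2 ⟨fun u hu => ?_, hg2⟩⟩, ?_⟩
    · obtain ⟨X, hX, hXc, hgu⟩ := hg1 u hu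
      change u ∈ shellSet τ at hu
      change g u ∈ _
      rw [hgu, mem_Lset]
      refine ⟨?_, Finset.subset_union_left, ?_⟩
      · rw [Finset.card_union_of_disjoint, hXc, card_erase_shell (hTt τ hτ) hu]
        · omega
        · exact Finset.disjoint_left.2 fun y hy hy' =>
            hplA τ hτ u y (hX hy') (Finset.mem_of_mem_erase hy)
      · intro hm
        rcases Finset.mem_union.1 hm with hm | hm
        · exact Finset.notMem_erase _ _ hm
        · exact hplA τ hτ u u (hX hm) hu
    · have hwA : τ.2.1 ∈ shellSet τ := by simp [shellSet]
      have haA : τ.2.2 ∈ shellSet τ := by simp [shellSet]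
      have hwa : τ.2.1 ≠ τ.2.2 := fun h => hdis 1 2 (by decide) _ h3 (h ▸ h4)
      obtain ⟨X, hX, -, hgw⟩ := hg1 _ hwA
      obtain ⟨Y, hY, -, hga⟩ := hg1 _ haA
      intro y hy
      change y ∈ g τ.2.1 ∩ g τ.2.2 at hy
      change y ∈ τ.1
      rw [hgw, hga, Finset.mem_inter, Finset.mem_union, Finset.mem_union] at hy
      rcases hy with ⟨hy1 | hy1, hy2 | hy2⟩
      · rw [Finset.mem_erase] at hy1 hy2
        have := hy1.2
        simp only [shellSet, Finset.mem_insert] at this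
        rcases this with h | h | h
        · exact absurd h hy2.1
        · exact absurd h hy1.1
        · exact h
      · exact absurd (Finset.mem_of_mem_erase hy1) (hplA τ hτ _ y (hY hy2))
      · exact absurd (Finset.mem_of_mem_erase hy2) (hplA τ hτ _ y (hX hy1))
      · have h5 := hX hy1
        have h6 := hY hy2
        simp only [pl, if_neg hwa] at h5
        simp only [pl, if_true] at h6
        exact absurd h6 (hdis 4 3 (by decide) _ h5)
  calc _ = (T.sigma G').card := by
        rw [Finset.card_sigma, Finset.sum_congr rfl hG'c, Finset.sum_const, hT,
          Finset.card_product, Finset.card_product, Finset.card_powersetCard, hPc, hPc, hPc,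
          smul_eq_mul]
        ring
    _ ≤ _ := Finset.card_le_card hsub

/-- The overlap bound. -/
lemma overlap {k j n : ℕ} (hjk : j < k) {p : ℝ} (hp : 0 ≤ p)
    (hQ : p * (n : ℝ) ^ (k - j) ≤ 1) (E : Finset (Finset (Fin n)))
    (hE : E.card = j + 2) (hEk : ∀ e ∈ E, e.card = k + 1) :
    ∑ x ∈ (cfgAll k j n).filter (fun x => ¬ Disjoint (sims x) E), p ^ (sims x \ E).card ≤
      (2 ^ ((j + 2) * (k + 1) + 1) * ((j + 2) * (k + 1) + 1 : ℝ) ^ 2 * ((j : ℝ) + 3) ^ (j + 2)) *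
        (1 + n * (p * (n : ℝ) ^ (k - j))) := by
  set Q := p * (n : ℝ) ^ (k - j) with hQd
  have hQ0 : 0 ≤ Q := by positivity
  set D := E.biUnion id with hD
  have hED : ∀ e ∈ E, e ⊆ D := fun e he => Finset.subset_biUnion_of_mem id he
  have hDc : D.card ≤ (j + 2) * (k + 1) := by
    rw [← hE]
    exact Finset.card_biUnion_le_card_mul _ _ _ fun e he => (hEk e he).le
  set wt : Finset (Fin n) → ℝ := fun e => if e ∈ E then 1 else p with hwt
  have hwt0 : ∀ e, 0 ≤ wt e := by intro e; simp only [hwt]; split_ifs <;> [norm_num; exact hp]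
  have hpow : ∀ x ∈ cfgAll k j n, p ^ (sims x \ E).card = ∏ u ∈ shellSet x.1, wt (x.2 u) := by
    intro x hx
    rw [← Finset.prod_image (f := wt) (Gset_injOn (mem_cfgAll.1 hx).2)]
    change _ = ∏ e ∈ sims x, wt e
    simp only [hwt]
    rw [Finset.prod_ite, Finset.prod_const_one, one_mul, Finset.prod_const]
    congr 2
    ext e
    simp
  -- sum over one coordinate
  have hfac : ∀ τ ∈ trips j n, ∀ u ∈ shellSet τ, ∑ e ∈ Lset k (shellSet τ) u, wt e ≤ (j : ℝ) + 3 := by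
    intro τ hτ u hu
    calc ∑ e ∈ Lset k (shellSet τ) u, wt e
        ≤ ∑ e ∈ Lset k (shellSet τ) u, (p + if e ∈ E then 1 else 0) := by
          refine Finset.sum_le_sum fun e _ => ?_
          simp only [hwt]; split_ifs <;> linarith
      _ = (Lset k (shellSet τ) u).card * p + ((Lset k (shellSet τ) u).filter (· ∈ E)).card := by
          rw [Finset.sum_add_distrib]; simp [Finset.filter_mem_eq_inter]
      _ ≤ Q + (j + 2) := by
          refine add_le_add ?_ ?_
          · rw [hQd, mul_comm]
            refine mul_le_mul_of_nonneg_left ?_ hp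
            exact_mod_cast card_Lset hjk hτ hu
          · have : ((Lset k (shellSet τ) u).filter (· ∈ E)).card ≤ j + 2 := by
              rw [← hE]
              exact Finset.card_le_card fun e he => (Finset.mem_filter.1 he).2
            exact_mod_cast this
      _ ≤ _ := by linarith
  have hfac0 : ∀ τ : Finset (Fin n) × Fin n × Fin n, ∀ u,
      0 ≤ ∑ e ∈ Lset k (shellSet τ) u, wt e := fun τ u => Finset.sum_nonneg fun e _ => hwt0 e
  have hfacQ : ∀ τ ∈ trips j n, ∀ u ∈ shellSet τ, ∀ v ∈ shellSet τ, v ∉ D → u ≠ v →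
      ∑ e ∈ Lset k (shellSet τ) u, wt e ≤ Q := by
    intro τ hτ u hu v hv hvD huv
    calc ∑ e ∈ Lset k (shellSet τ) u, wt e = ∑ e ∈ Lset k (shellSet τ) u, p := by
          refine Finset.sum_congr rfl fun e he => ?_
          simp only [hwt]
          refine if_neg fun heE => hvD (hED e heE ?_)
          exact (mem_Lset.1 he).2.1 (Finset.mem_erase.2 ⟨huv.symm, hv⟩)
      _ = (Lset k (shellSet τ) u).card * p := by simp
      _ ≤ Q := by
          rw [hQd, mul_comm]
          refine mul_le_mul_of_nonneg_left ?_ hp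
          exact_mod_cast card_Lset hjk hτ hu
  set B : ℝ := ((j : ℝ) + 3) ^ (j + 2) with hB
  have hB0 : 0 ≤ B := by positivity
  have hprod : ∀ τ ∈ trips j n, ∏ u ∈ shellSet τ, ∑ e ∈ Lset k (shellSet τ) u, wt e ≤ B := by
    intro τ hτ
    rw [hB, ← card_shellSet hτ, ← Finset.prod_const]
    exact Finset.prod_le_prod (fun u _ => hfac0 _ _) (hfac τ hτ)
  have hprodQ : ∀ τ ∈ trips j n, ∀ v ∈ shellSet τ, v ∉ D →
      ∏ u ∈ shellSet τ, ∑ e ∈ Lset k (shellSet τ) u, wt e ≤ B * Q := by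
    intro τ hτ v hv hvD
    obtain ⟨u, hu⟩ : ((shellSet τ).erase v).Nonempty := by
      rw [← Finset.card_pos, card_erase_shell hτ hv]; omega
    rw [Finset.mem_erase] at hu
    rw [← Finset.prod_erase_mul _ _ hu.2]
    refine mul_le_mul ?_ (hfacQ τ hτ u hu.2 v hv hvD hu.1) (hfac0 _ _) hB0
    calc ∏ u ∈ (shellSet τ).erase u, ∑ e ∈ Lset k (shellSet τ) u, wt e
        ≤ ∏ u ∈ (shellSet τ).erase u, ((j : ℝ) + 3) :=
          Finset.prod_le_prod (fun u _ => hfac0 _ _)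
            fun u hu => hfac τ hτ u (Finset.mem_of_mem_erase hu)
      _ = ((j : ℝ) + 3) ^ (j + 1) := by
          rw [Finset.prod_const, card_erase_shell hτ hu.2]
      _ ≤ B := pow_le_pow_right₀ (by linarith [(Nat.cast_nonneg j : (0 : ℝ) ≤ j)]) (by omega)
  set T1 := (trips j n).filter fun τ => shellSet τ ⊆ D with hT1
  set T2 := (trips j n).filter fun τ => ∃ u ∈ shellSet τ, u ∉ D ∧ shellSet τ ⊆ insert u D with hT2
  set W : Finset (Fin n) → Finset (Finset (Fin n) × Fin n × Fin n) :=
    fun Z => Z.powerset ×ˢ (Z ×ˢ Z) with hW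
  have hWm : ∀ Z τ, shellSet τ ⊆ Z → τ ∈ W Z := by
    intro Z τ h
    simp only [hW, Finset.mem_product, Finset.mem_powerset]
    refine ⟨fun y hy => h ?_, h ?_, h ?_⟩ <;> simp [shellSet, *]
  set M : ℕ := (j + 2) * (k + 1) + 1 with hM
  have hWc : ∀ Z, Z.card ≤ M → (W Z).card ≤ 2 ^ M * M ^ 2 := by
    intro Z hZ
    simp only [hW, Finset.card_product, Finset.card_powerset]
    rw [sq]
    gcongr
    norm_num
  have hT1c : T1.card ≤ 2 ^ M * M ^ 2 := by
    refine (Finset.card_le_card fun τ hτ => ?_).trans (hWc D (by omega))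
    exact hWm D τ (Finset.mem_filter.1 hτ).2
  have hT2c : T2.card ≤ n * (2 ^ M * M ^ 2) := by
    calc T2.card ≤ ((Finset.univ : Finset (Fin n)).biUnion fun u => W (insert u D)).card := by
          refine Finset.card_le_card fun τ hτ => ?_
          obtain ⟨u, hu, -, hs⟩ := (Finset.mem_filter.1 hτ).2
          exact Finset.mem_biUnion.2 ⟨u, Finset.mem_univ _, hWm _ τ hs⟩
      _ ≤ (Finset.univ : Finset (Fin n)).card * (2 ^ M * M ^ 2) :=
          Finset.card_biUnion_le_card_mul _ _ _ fun u _ =>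
            hWc _ ((Finset.card_insert_le _ _).trans (by omega))
      _ = _ := by simp
  have hsub : (cfgAll k j n).filter (fun x => ¬ Disjoint (sims x) E) ⊆
      (T1 ∪ T2).sigma fun τ => Gset k (shellSet τ) := by
    intro x hx
    rw [Finset.mem_filter] at hx
    obtain ⟨hx, hnd⟩ := hx
    rw [Finset.not_disjoint_iff] at hnd
    obtain ⟨e, heS, heE⟩ := hnd
    have hx' := mem_cfgAll.1 hx
    obtain ⟨u, hu, rfl⟩ := Finset.mem_image.1 heS
    have h1 := (mem_Lset.1 ((mem_Gset.1 hx'.2).1 u hu)).2.1.trans (hED _ heE)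
    rw [Finset.mem_sigma]
    refine ⟨?_, hx'.2⟩
    rw [Finset.mem_union]
    by_cases huD : u ∈ D
    · left
      refine Finset.mem_filter.2 ⟨hx'.1, fun y hy => ?_⟩
      by_cases hyu : y = u
      · rw [hyu]; exact huD
      · exact h1 (Finset.mem_erase.2 ⟨hyu, hy⟩)
    · right
      refine Finset.mem_filter.2 ⟨hx'.1, u, hu, huD, fun y hy => ?_⟩
      by_cases hyu : y = u
      · rw [hyu]; exact Finset.mem_insert_self _ _
      · exact Finset.mem_insert_of_mem (h1 (Finset.mem_erase.2 ⟨hyu, hy⟩))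
  have hwp0 : ∀ τ : Finset (Fin n) × Fin n × Fin n,
      0 ≤ ∏ u ∈ shellSet τ, ∑ e ∈ Lset k (shellSet τ) u, wt e :=
    fun τ => Finset.prod_nonneg fun u _ => hfac0 _ _
  calc _ = ∑ x ∈ (cfgAll k j n).filter (fun x => ¬ Disjoint (sims x) E),
          ∏ u ∈ shellSet x.1, wt (x.2 u) :=
        Finset.sum_congr rfl fun x hx => hpow x (Finset.mem_filter.1 hx).1
    _ ≤ ∑ x ∈ (T1 ∪ T2).sigma fun τ => Gset k (shellSet τ), ∏ u ∈ shellSet x.1, wt (x.2 u) :=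
        Finset.sum_le_sum_of_subset_of_nonneg hsub fun x _ _ =>
          Finset.prod_nonneg fun u _ => hwt0 _
    _ = ∑ τ ∈ T1 ∪ T2, ∏ u ∈ shellSet τ, ∑ e ∈ Lset k (shellSet τ) u, wt e := by
        rw [Finset.sum_sigma]
        exact Finset.sum_congr rfl fun τ _ => prod_Gset _ _
    _ ≤ (∑ τ ∈ T1, ∏ u ∈ shellSet τ, ∑ e ∈ Lset k (shellSet τ) u, wt e) +
          ∑ τ ∈ T2, ∏ u ∈ shellSet τ, ∑ e ∈ Lset k (shellSet τ) u, wt e := by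
        rw [← Finset.sum_union_inter]
        have : 0 ≤ ∑ τ ∈ T1 ∩ T2, ∏ u ∈ shellSet τ, ∑ e ∈ Lset k (shellSet τ) u, wt e :=
          Finset.sum_nonneg fun τ _ => hwp0 τ
        linarith
    _ ≤ T1.card * B + T2.card * (B * Q) := by
        refine add_le_add ?_ ?_
        · rw [← nsmul_eq_mul]
          exact Finset.sum_le_card_nsmul _ _ _ fun τ hτ => hprod τ (Finset.mem_filter.1 hτ).1
        · rw [← nsmul_eq_mul]
          refine Finset.sum_le_card_nsmul _ _ _ fun τ hτ => ?_
          obtain ⟨h1, v, hv, hvD, -⟩ := Finset.mem_filter.1 hτ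
          exact hprodQ τ h1 v hv hvD
    _ ≤ ((2 ^ M * M ^ 2 : ℕ) : ℝ) * B + ((n * (2 ^ M * M ^ 2) : ℕ) : ℝ) * (B * Q) := by
        have h1 : (T1.card : ℝ) ≤ ((2 ^ M * M ^ 2 : ℕ) : ℝ) := by exact_mod_cast hT1c
        have h2 : (T2.card : ℝ) ≤ ((n * (2 ^ M * M ^ 2) : ℕ) : ℝ) := by exact_mod_cast hT2c
        gcongr
    _ = _ := by
        rw [hM]
        push_cast
        ring

/-! ### Moments -/

lemma birth_prob1 : IsProbabilityMeasure (volume.restrict (Set.Icc (0 : ℝ) 1)) :=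
  ⟨by simp⟩

lemma birth_prob (n : ℕ) : IsProbabilityMeasure (birthMeasure n) := by
  have := birth_prob1
  unfold birthMeasure
  infer_instance

/-- The complex generated by a set of `k`-simplices. -/
def gen {n : ℕ} (H : Finset (Finset (Fin n))) : Set (Finset (Fin n)) :=
  {A | (∃ v, A = {v}) ∨ (A.Nonempty ∧ ∃ K ∈ H, A ⊆ K)}

lemma complexAt_eq (k n : ℕ) (t : Finset (Fin n) → ℝ) (p : ℝ) :
    complexAt k n t p = gen (tops k n t p) := by
  ext A
  simp only [complexAt, gen, Set.mem_ofPred_eq, mem_tops, and_assoc]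

lemma measurable_tops (k n : ℕ) (p : ℝ) (F : Finset (Finset (Fin n)) → ℝ) :
    Measurable fun t => F (tops k n t p) := by
  have h1 : Measurable fun (t : Finset (Fin n) → ℝ) (K : Finset (Fin n)) => (t K ≤ p : Prop) := by
    rw [measurable_pi_iff]
    intro K
    exact measurableSet_setOfPred.1 (measurableSet_le (measurable_pi_apply K) measurable_const)
  have h2 : Measurable fun P : Finset (Fin n) → Prop =>
      F (Finset.univ.filter fun K => K.card = k + 1 ∧ P K) := measurable_of_finite _
  exact h2.comp h1

lemma memLp_tops (k n : ℕ) (p : ℝ) (F : Finset (Finset (Fin n)) → ℝ) :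
    MemLp (fun t => F (tops k n t p)) 2 (birthMeasure n) := by
  have := birth_prob n
  refine MemLp.of_bound (measurable_tops k n p F).aestronglyMeasurable (∑ H, ‖F H‖)
    (Eventually.of_forall fun t => ?_)
  exact Finset.single_le_sum (f := fun H => ‖F H‖) (fun H _ => norm_nonneg _) (Finset.mem_univ _)

lemma integrable_tops (k n : ℕ) (p : ℝ) (F : Finset (Finset (Fin n)) → ℝ) :
    Integrable (fun t => F (tops k n t p)) (birthMeasure n) := by
  have := birth_prob n
  exact (memLp_tops k n p F).integrable (by norm_num)

/-- Indicator of a family of simplices being present. -/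
noncomputable def ind {n : ℕ} (S H : Finset (Finset (Fin n))) : ℝ := if S ⊆ H then 1 else 0

lemma ind_mul {n : ℕ} (S S' H : Finset (Finset (Fin n))) :
    ind S H * ind S' H = ind (S ∪ S') H := by
  unfold ind
  by_cases h1 : S ⊆ H <;> by_cases h2 : S' ⊆ H <;> simp [h1, h2, Finset.union_subset_iff]

lemma integral_ind {k n : ℕ} {p : ℝ} (hp0 : 0 ≤ p) (hp1 : p ≤ 1) (S : Finset (Finset (Fin n)))
    (hS : ∀ e ∈ S, e.card = k + 1) :
    ∫ t, ind S (tops k n t p) ∂(birthMeasure n) = p ^ S.card := by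
  have := birth_prob1
  have hset : {t : Finset (Fin n) → ℝ | S ⊆ tops k n t p} =
      Set.pi Set.univ fun e => if e ∈ S then Set.Iic p else Set.univ := by
    ext t
    simp only [Set.mem_ofPred_eq, Set.mem_pi, Set.mem_univ, true_imp_iff]
    constructor
    · intro h e
      by_cases he : e ∈ S
      · rw [if_pos he]; exact (mem_tops.1 (h he)).2
      · rw [if_neg he]; trivial
    · intro h e he
      have := h e
      rw [if_pos he] at this
      exact mem_tops.2 ⟨hS e he, this⟩
  have hmeas : MeasurableSet {t : Finset (Fin n) → ℝ | S ⊆ tops k n t p} := by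
    rw [hset]
    refine MeasurableSet.univ_pi fun e => ?_
    split_ifs
    · exact measurableSet_Iic
    · exact MeasurableSet.univ
  have h1 : (fun t => ind S (tops k n t p)) =
      Set.indicator {t : Finset (Fin n) → ℝ | S ⊆ tops k n t p} (fun _ => (1 : ℝ)) := by
    funext t
    simp [ind, Set.indicator_apply]
  rw [h1, integral_indicator_const _ hmeas, smul_eq_mul, mul_one, measureReal_def, hset,
    birthMeasure, Measure.pi_pi, ENNReal.toReal_prod]
  have h2 : ∀ e : Finset (Fin n), ((volume.restrict (Set.Icc (0 : ℝ) 1))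
      (if e ∈ S then Set.Iic p else Set.univ)).toReal = if e ∈ S then p else 1 := by
    intro e
    split_ifs
    · rw [Measure.restrict_apply measurableSet_Iic]
      have : Set.Iic p ∩ Set.Icc (0 : ℝ) 1 = Set.Icc 0 p := by
        ext y; simp only [Set.mem_inter_iff, Set.mem_Iic, Set.mem_Icc]
        constructor
        · rintro ⟨h1, h2, h3⟩; exact ⟨h2, h1⟩
        · rintro ⟨h1, h2⟩; exact ⟨h2, h1, h2.trans hp1⟩
      rw [this]
      simp [hp0]
    · simp
  rw [Finset.prod_congr rfl fun e _ => h2 e, Finset.prod_ite_mem, Finset.univ_inter,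
    Finset.prod_const]

/-- The random variable `X_*`. -/
noncomputable def Xs (k j n : ℕ) (p : ℝ) (t : Finset (Fin n) → ℝ) : ℝ :=
  (countMjStar k j (complexAt k n t p) : ℝ)

lemma Xs_eq (k j n : ℕ) (p : ℝ) :
    Xs k j n p = fun t => (fun H => (countMjStar k j (gen H) : ℝ)) (tops k n t p) := by
  funext t
  simp only [Xs, complexAt_eq]

lemma Xs_memLp (k j n : ℕ) (p : ℝ) : MemLp (Xs k j n p) 2 (birthMeasure n) := by
  rw [Xs_eq]; exact memLp_tops k n p fun H => (countMjStar k j (gen H) : ℝ)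

lemma Xs_nonneg (k j n : ℕ) (p : ℝ) (t : Finset (Fin n) → ℝ) : 0 ≤ Xs k j n p t :=
  Nat.cast_nonneg _

lemma Xs_le {k j n : ℕ} (hj : 1 ≤ j) (hjk : j < k) (p : ℝ) (t : Finset (Fin n) → ℝ) :
    Xs k j n p t ≤ ∑ x ∈ cfg k j n, ind (sims x) (tops k n t p) := by
  have := count_le hj hjk t p
  calc Xs k j n p t ≤ (((cfg k j n).filter fun x => sims x ⊆ tops k n t p).card : ℝ) := by
        unfold Xs; exact_mod_cast this
    _ = _ := by simp [ind]

lemma le_Xs {k j n : ℕ} (hj : 1 ≤ j) (hjk : j < k) (p : ℝ) (t : Finset (Fin n) → ℝ) :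
    ∑ x ∈ cfg k j n, (ind (sims x) (tops k n t p) -
      ∑ e ∈ bad k x, ind (insert e (sims x)) (tops k n t p)) ≤ Xs k j n p t := by
  have := le_count hj hjk t p
  calc _ ≤ ∑ x ∈ cfg k j n, (if sims x ⊆ tops k n t p ∧ ∀ e ∈ bad k x, e ∉ tops k n t p
          then (1 : ℝ) else 0) := by
        refine Finset.sum_le_sum fun x _ => ?_
        have hnn : ∀ e ∈ bad k x, 0 ≤ ind (insert e (sims x)) (tops k n t p) := by
          intro e _; unfold ind; split_ifs <;> norm_num
        have hs := Finset.sum_nonneg hnn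
        by_cases h1 : sims x ⊆ tops k n t p
        · by_cases h2 : ∀ e ∈ bad k x, e ∉ tops k n t p
          · rw [if_pos ⟨h1, h2⟩]
            have : ind (sims x) (tops k n t p) = 1 := if_pos h1
            linarith
          · rw [if_neg fun h => h2 h.2]
            push Not at h2
            obtain ⟨e, he, heH⟩ := h2
            have h3 := Finset.single_le_sum hnn he
            have h4 : ind (insert e (sims x)) (tops k n t p) = 1 :=
              if_pos (Finset.insert_subset heH h1)
            have : ind (sims x) (tops k n t p) = 1 := if_pos h1
            linarith
        · rw [if_neg fun h => h1 h.1]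
          have : ind (sims x) (tops k n t p) = 0 := if_neg h1
          linarith
    _ = (((cfg k j n).filter fun x => sims x ⊆ tops k n t p ∧
          ∀ e ∈ bad k x, e ∉ tops k n t p).card : ℝ) := by
        rw [Finset.card_filter]; push_cast; rfl
    _ ≤ _ := by unfold Xs; exact_mod_cast this

lemma cfg_sub {k j n : ℕ} {x : Cf n} (hx : x ∈ cfg k j n) : x ∈ cfgAll k j n :=
  (mem_cfg.1 hx).1

lemma expect_le {k j n : ℕ} (hj : 1 ≤ j) (hjk : j < k) {p : ℝ} (hp0 : 0 ≤ p) (hp1 : p ≤ 1) :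
    ∫ t, Xs k j n p t ∂(birthMeasure n) ≤ (cfg k j n).card * p ^ (j + 2) := by
  have := birth_prob n
  calc ∫ t, Xs k j n p t ∂(birthMeasure n)
      ≤ ∫ t, ∑ x ∈ cfg k j n, ind (sims x) (tops k n t p) ∂(birthMeasure n) := by
        refine integral_mono ((Xs_memLp k j n p).integrable (by norm_num)) ?_ (Xs_le hj hjk p)
        exact integrable_finsetSum _ fun x _ => integrable_tops k n p (ind (sims x))
    _ = ∑ x ∈ cfg k j n, p ^ (j + 2) := by
        rw [integral_finsetSum _ fun x _ => integrable_tops k n p (ind (sims x))]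
        refine Finset.sum_congr rfl fun x hx => ?_
        rw [integral_ind hp0 hp1 _ fun e he => card_of_mem_sims (cfg_sub hx) he,
          card_sims (cfg_sub hx)]
    _ = _ := by simp

lemma le_expect {k j n : ℕ} (hj : 1 ≤ j) (hjk : j < k) {p : ℝ} (hp0 : 0 ≤ p) (hp1 : p ≤ 1) :
    (cfg k j n).card * p ^ (j + 2) * (1 - (j + k + 3) * (p * (n : ℝ) ^ (k - j))) ≤
      ∫ t, Xs k j n p t ∂(birthMeasure n) := by
  have := birth_prob n
  have hI : ∀ x ∈ cfg k j n, Integrable (fun t => ind (sims x) (tops k n t p) -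
      ∑ e ∈ bad k x, ind (insert e (sims x)) (tops k n t p)) (birthMeasure n) := fun x _ =>
    (integrable_tops k n p (ind (sims x))).sub
      (integrable_finsetSum _ fun e _ => integrable_tops k n p (ind (insert e (sims x))))
  calc _ = ∑ x ∈ cfg k j n, (p ^ (j + 2) - ((j + k + 3) * (n : ℝ) ^ (k - j)) * p ^ (j + 3)) := by
        rw [Finset.sum_const, nsmul_eq_mul]; ring
    _ ≤ ∑ x ∈ cfg k j n, (p ^ (j + 2) - (bad k x).card * p ^ (j + 3)) := by
        refine Finset.sum_le_sum fun x hx => ?_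
        have : ((bad k x).card : ℝ) ≤ (j + k + 3) * (n : ℝ) ^ (k - j) := by
          exact_mod_cast card_bad hjk (cfg_sub hx)
        gcongr
    _ = ∫ t, ∑ x ∈ cfg k j n, (ind (sims x) (tops k n t p) -
          ∑ e ∈ bad k x, ind (insert e (sims x)) (tops k n t p)) ∂(birthMeasure n) := by
        rw [integral_finsetSum _ hI]
        refine Finset.sum_congr rfl fun x hx => ?_
        rw [integral_sub (integrable_tops k n p (ind (sims x)))
          (integrable_finsetSum _ fun e _ => integrable_tops k n p (ind (insert e (sims x)))),
          integral_finsetSum _ fun e _ => integrable_tops k n p (ind (insert e (sims x))),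
          integral_ind hp0 hp1 _ fun e he => card_of_mem_sims (cfg_sub hx) he,
          card_sims (cfg_sub hx)]
        have : ∀ e ∈ bad k x, ∫ t, ind (insert e (sims x)) (tops k n t p) ∂(birthMeasure n) =
            p ^ (j + 3) := by
          intro e he
          have he' := (Finset.mem_filter.1 he).2
          rw [integral_ind hp0 hp1, Finset.card_insert_of_notMem he'.2.1, card_sims (cfg_sub hx)]
          intro e' h
          rcases Finset.mem_insert.1 h with rfl | h
          · exact he'.1
          · exact card_of_mem_sims (cfg_sub hx) h
        rw [Finset.sum_congr rfl this, Finset.sum_const, nsmul_eq_mul]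
    _ ≤ _ := by
        refine integral_mono (integrable_finsetSum _ hI)
          ((Xs_memLp k j n p).integrable (by norm_num)) (le_Xs hj hjk p)

/-- The constant in the overlap bound. -/
noncomputable def ovC (k j : ℕ) : ℝ :=
  2 ^ ((j + 2) * (k + 1) + 1) * ((j + 2) * (k + 1) + 1 : ℝ) ^ 2 * ((j : ℝ) + 3) ^ (j + 2)

lemma expect_sq_le {k j n : ℕ} (hj : 1 ≤ j) (hjk : j < k) {p : ℝ} (hp0 : 0 ≤ p) (hp1 : p ≤ 1)
    (hQ : p * (n : ℝ) ^ (k - j) ≤ 1) :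
    ∫ t, (Xs k j n p t) ^ 2 ∂(birthMeasure n) ≤ ((cfg k j n).card * p ^ (j + 2)) ^ 2 +
      ((cfg k j n).card * p ^ (j + 2)) * (ovC k j * (1 + n * (p * (n : ℝ) ^ (k - j)))) := by
  have := birth_prob n
  calc ∫ t, (Xs k j n p t) ^ 2 ∂(birthMeasure n)
      ≤ ∫ t, ∑ x ∈ cfg k j n, ∑ y ∈ cfg k j n, ind (sims x ∪ sims y) (tops k n t p)
          ∂(birthMeasure n) := by
        refine integral_mono (Xs_memLp k j n p).integrable_sq ?_ fun t => ?_
        · exact integrable_finsetSum _ fun x _ => integrable_finsetSum _ fun y _ =>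
            integrable_tops k n p (ind (sims x ∪ sims y))
        · calc (Xs k j n p t) ^ 2 ≤ (∑ x ∈ cfg k j n, ind (sims x) (tops k n t p)) ^ 2 :=
                pow_le_pow_left₀ (Xs_nonneg k j n p t) (Xs_le hj hjk p t) 2
            _ = _ := by
                rw [sq, Finset.sum_mul_sum]
                simp only [ind_mul]
    _ = ∑ x ∈ cfg k j n, ∑ y ∈ cfg k j n, p ^ (sims x ∪ sims y).card := by
        rw [integral_finsetSum _ fun x _ => integrable_finsetSum _ fun y _ =>
            integrable_tops k n p (ind (sims x ∪ sims y))]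
        refine Finset.sum_congr rfl fun x hx => ?_
        rw [integral_finsetSum _ fun y _ => integrable_tops k n p (ind (sims x ∪ sims y))]
        refine Finset.sum_congr rfl fun y hy => ?_
        refine integral_ind hp0 hp1 _ fun e he => ?_
        rcases Finset.mem_union.1 he with he | he
        · exact card_of_mem_sims (cfg_sub hx) he
        · exact card_of_mem_sims (cfg_sub hy) he
    _ ≤ ∑ x ∈ cfg k j n, p ^ (j + 2) * ((cfg k j n).card * p ^ (j + 2) +
          ovC k j * (1 + n * (p * (n : ℝ) ^ (k - j)))) := by
        refine Finset.sum_le_sum fun x hx => ?_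
        have h1 : ∀ y, p ^ (sims x ∪ sims y).card = p ^ (j + 2) * p ^ (sims y \ sims x).card := by
          intro y
          rw [← pow_add, ← card_sims (cfg_sub hx), ← Finset.union_sdiff_self_eq_union,
            Finset.card_union_of_disjoint Finset.disjoint_sdiff]
        rw [Finset.sum_congr rfl fun y _ => h1 y, ← Finset.mul_sum]
        refine mul_le_mul_of_nonneg_left ?_ (by positivity)
        rw [← Finset.sum_filter_add_sum_filter_not (cfg k j n)
          (fun y => Disjoint (sims y) (sims x))]
        refine add_le_add ?_ ?_
        · calc ∑ y ∈ (cfg k j n).filter (fun y => Disjoint (sims y) (sims x)),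
                p ^ (sims y \ sims x).card
              = ∑ y ∈ (cfg k j n).filter (fun y => Disjoint (sims y) (sims x)), p ^ (j + 2) := by
                refine Finset.sum_congr rfl fun y hy => ?_
                rw [Finset.mem_filter] at hy
                rw [Finset.sdiff_eq_self_of_disjoint hy.2, card_sims (cfg_sub hy.1)]
            _ ≤ ∑ y ∈ cfg k j n, p ^ (j + 2) :=
                Finset.sum_le_sum_of_subset_of_nonneg (Finset.filter_subset _ _)
                  fun _ _ _ => by positivity
            _ = _ := by simp
        · refine le_trans (Finset.sum_le_sum_of_subset_of_nonneg
            (t := (cfgAll k j n).filter fun y => ¬ Disjoint (sims y) (sims x)) ?_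
            fun _ _ _ => by positivity)
            (overlap hjk hp0 hQ (sims x) (card_sims (cfg_sub hx))
              fun e he => card_of_mem_sims (cfg_sub hx) he)
          intro y hy
          rw [Finset.mem_filter] at hy ⊢
          exact ⟨cfg_sub hy.1, hy.2⟩
    _ = _ := by
        rw [Finset.sum_const, nsmul_eq_mul]; ring

/-- The Chebyshev inequality for `X_*`. -/
lemma cheb {k j n : ℕ} {p ε : ℝ} (hε : 0 < ε)
    (hE : 0 < ∫ t, Xs k j n p t ∂(birthMeasure n)) :
    1 - ENNReal.ofReal ((∫ t, (Xs k j n p t) ^ 2 ∂(birthMeasure n) -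
        (∫ t, Xs k j n p t ∂(birthMeasure n)) ^ 2) /
          (ε * ∫ t, Xs k j n p t ∂(birthMeasure n)) ^ 2) ≤
      birthMeasure n {t | |Xs k j n p t - ∫ t, Xs k j n p t ∂(birthMeasure n)| ≤
        ε * ∫ t, Xs k j n p t ∂(birthMeasure n)} := by
  have := birth_prob n
  set m := ∫ t, Xs k j n p t ∂(birthMeasure n) with hm
  have h1 := ProbabilityTheory.meas_ge_le_variance_div_sq (Xs_memLp k j n p)
    (c := ε * m) (by positivity)
  rw [ProbabilityTheory.variance_eq_sub (Xs_memLp k j n p)] at h1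
  rw [tsub_le_iff_right]
  calc (1 : ENNReal) = birthMeasure n Set.univ := measure_univ.symm
    _ ≤ birthMeasure n ({t | |Xs k j n p t - m| ≤ ε * m} ∪ {t | ε * m ≤ |Xs k j n p t - m|}) := by
        refine measure_mono fun t _ => ?_
        exact le_total |Xs k j n p t - m| (ε * m)
    _ ≤ _ := (measure_union_le _ _).trans (add_le_add le_rfl h1)

/-! ### Asymptotics -/

/-- The leading constant of `p_{j-1}^-`. -/
noncomputable def gam (k j : ℕ) : ℝ :=
  (j : ℝ) * (Nat.factorial (k - j + 1)) / ((k - j + 2 : ℕ) : ℝ)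

/-- The quantity `n * p * n^(k-j)`. -/
noncomputable def lam (k j n : ℕ) : ℝ := n * (pjPrevMinus k j n * (n : ℝ) ^ (k - j))

/-- The lower-bound constant for the number of configurations. -/
noncomputable def cc (k j : ℕ) : ℝ :=
  (1 / 10) ^ (j + 2) * ((1 / 10) ^ (k - j)) ^ (j + 2) /
    ((Nat.factorial j) * (Nat.factorial (k - j)) ^ (j + 2))

lemma cc_pos (k j : ℕ) : 0 < cc k j := by unfold cc; positivity

lemma gam_pos {k j : ℕ} (hj : 1 ≤ j) : 0 < gam k j := by
  unfold gam
  have : (0 : ℝ) < j := by exact_mod_cast hj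
  have : (0 : ℝ) < ((k - j + 2 : ℕ) : ℝ) := by positivity
  positivity

lemma lam_eq {k j n : ℕ} (hn : 1 ≤ n) :
    lam k j n = (1 - 1 / Real.sqrt (Real.log n)) * (gam k j * Real.log n) := by
  have hn' : (n : ℝ) ≠ 0 := by positivity
  have h2 : ((k - j + 2 : ℕ) : ℝ) ≠ 0 := by positivity
  unfold lam pjPrevMinus gam
  rw [pow_succ]
  have h3 : (n : ℝ) ^ (k - j) ≠ 0 := by positivity
  field_simp

lemma choose_lower {n r k : ℕ} (hr : r ≤ k) (hn : 10 * k ≤ n) :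
    ((n : ℝ) / 10) ^ r / (Nat.factorial r) ≤ ((n / 5).choose r : ℝ) := by
  refine le_trans ?_ (Nat.pow_le_choose r (n / 5))
  have h1 : (n : ℝ) / 10 ≤ ((n / 5 + 1 - r : ℕ) : ℝ) := by
    rw [div_le_iff₀ (by norm_num)]
    have : n ≤ (n / 5 + 1 - r) * 10 := by omega
    exact_mod_cast this
  gcongr

lemma le_card_cfg' {k j n : ℕ} (hjk : j < k) (hn : 10 * k ≤ n) :
    cc k j * ((n : ℝ) ^ (k - j + 1)) ^ (j + 2) ≤ (cfg k j n).card := by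
  have h0 : (((n / 5).choose j * (n / 5) * (n / 5) * ((n / 5).choose (k - j)) ^ (j + 2) : ℕ) : ℝ) ≤
      (cfg k j n).card := by exact_mod_cast le_card_cfg hjk
  refine le_trans ?_ h0
  push_cast
  have h1 := choose_lower (r := j) hjk.le hn
  have h2 := choose_lower (r := k - j) (Nat.sub_le _ _) hn
  have h3 := choose_lower (r := 1) (by omega : 1 ≤ k) hn
  simp only [pow_one, Nat.factorial_one, Nat.cast_one, div_one, Nat.choose_one_right] at h3
  calc cc k j * ((n : ℝ) ^ (k - j + 1)) ^ (j + 2)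
      = ((n : ℝ) / 10) ^ j / (Nat.factorial j) * ((n : ℝ) / 10) * ((n : ℝ) / 10) *
          (((n : ℝ) / 10) ^ (k - j) / (Nat.factorial (k - j))) ^ (j + 2) := by
        unfold cc
        rw [div_eq_mul_one_div (n : ℝ) 10, pow_succ (n : ℝ) (k - j)]
        generalize (1 / 10 : ℝ) = b
        rw [div_pow, mul_pow _ _ (k - j)]
        generalize (n : ℝ) ^ (k - j) = N
        generalize b ^ (k - j) = b'
        have h4 : (Nat.factorial j : ℝ) ≠ 0 := by positivity
        have h5 : (Nat.factorial (k - j) : ℝ) ≠ 0 := by positivity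
        field_simp
        ring
    _ ≤ _ := by
        gcongr

lemma ev_log (k j : ℕ) (hj : 1 ≤ j) : ∀ᶠ n : ℕ in atTop,
    gam k j / 2 * Real.log n ≤ lam k j n ∧ lam k j n ≤ gam k j * Real.log n := by
  have hlog : Tendsto (fun n : ℕ => Real.log n) atTop atTop :=
    Real.tendsto_log_atTop.comp tendsto_natCast_atTop_atTop
  filter_upwards [hlog.eventually_ge_atTop 4, eventually_ge_atTop 1] with n h4 hn
  rw [lam_eq hn]
  have hs : 2 ≤ Real.sqrt (Real.log n) := by
    apply Real.le_sqrt_of_sq_le; linarith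
  have h1 : 1 / Real.sqrt (Real.log n) ≤ 1 / 2 := by
    apply one_div_le_one_div_of_le <;> linarith
  have h2 : 0 ≤ 1 / Real.sqrt (Real.log n) := by positivity
  have h3 : 0 ≤ gam k j * Real.log n := mul_nonneg (gam_pos hj).le (by linarith)
  constructor <;> nlinarith

lemma lam_tendsto (k j : ℕ) (hj : 1 ≤ j) : Tendsto (lam k j) atTop atTop := by
  have hlog : Tendsto (fun n : ℕ => Real.log n) atTop atTop :=
    Real.tendsto_log_atTop.comp tendsto_natCast_atTop_atTop
  refine tendsto_atTop_mono' _ ((ev_log k j hj).mono fun n h => h.1)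
    (hlog.const_mul_atTop (half_pos (gam_pos hj)))

lemma Q_tendsto (k j : ℕ) (hj : 1 ≤ j) :
    Tendsto (fun n : ℕ => pjPrevMinus k j n * (n : ℝ) ^ (k - j)) atTop (nhds 0) := by
  have h1 : Tendsto (fun n : ℕ => gam k j * (Real.log n / n)) atTop (nhds 0) := by
    have h : Tendsto (fun x : ℝ => Real.log x / x) atTop (nhds 0) :=
      Real.isLittleO_log_id_atTop.tendsto_div_nhds_zero
    have := (h.comp tendsto_natCast_atTop_atTop).const_mul (gam k j)
    simpa using this
  refine tendsto_of_tendsto_of_tendsto_of_le_of_le' tendsto_const_nhds h1 ?_ ?_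
  · filter_upwards [(lam_tendsto k j hj).eventually_ge_atTop 1, eventually_ge_atTop 1] with n h hn
    unfold lam at h
    have hn' : (0 : ℝ) < n := by exact_mod_cast hn
    by_contra hc
    push Not at hc
    nlinarith
  · filter_upwards [ev_log k j hj, eventually_ge_atTop 1] with n h hn
    have hn' : (0 : ℝ) < n := by exact_mod_cast hn
    rw [← mul_div_assoc, le_div_iff₀ hn', mul_comm]
    exact h.2

/-- Everything that is needed at a fixed, large `n`. -/
lemma ev_main (k j : ℕ) (hj : 1 ≤ j) (hjk : j < k) : ∀ᶠ n : ℕ in atTop,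
    ∃ y : ℝ, cc k j * (lam k j n) ^ (j + 2) ≤ y ∧ y ≤ (lam k j n) ^ (j + 2) ∧
      1 ≤ lam k j n ∧ 0 ≤ (j + k + 3) * (pjPrevMinus k j n * (n : ℝ) ^ (k - j)) ∧
      (j + k + 3) * (pjPrevMinus k j n * (n : ℝ) ^ (k - j)) ≤ 1 / 2 ∧
      y * (1 - (j + k + 3) * (pjPrevMinus k j n * (n : ℝ) ^ (k - j))) ≤ expectStar k j n ∧
      expectStar k j n ≤ y ∧
      ∫ t, (Xs k j n (pjPrevMinus k j n) t) ^ 2 ∂(birthMeasure n) ≤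
        y ^ 2 + y * (ovC k j * (1 + lam k j n)) := by
  have hc : (0 : ℝ) < 1 / (2 * (j + k + 3)) := by positivity
  filter_upwards [(lam_tendsto k j hj).eventually_ge_atTop 1, eventually_ge_atTop 1,
    eventually_ge_atTop (10 * k), (Q_tendsto k j hj).eventually_lt_const hc] with n hl hn hn10 hQ
  have hn1 : (1 : ℝ) ≤ n := by exact_mod_cast hn
  have hn' : (0 : ℝ) < n := by linarith
  set p := pjPrevMinus k j n with hp
  have hnp : (1 : ℝ) ≤ (n : ℝ) ^ (k - j) := one_le_pow₀ hn1
  have hQ0 : 0 < p * (n : ℝ) ^ (k - j) := by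
    have h : 1 ≤ n * (p * (n : ℝ) ^ (k - j)) := hl
    by_contra hc
    push Not at hc
    nlinarith
  have hp0 : 0 < p := pos_of_mul_pos_left hQ0 (by linarith)
  have hpQ : p ≤ p * (n : ℝ) ^ (k - j) := le_mul_of_one_le_right hp0.le hnp
  have hδ : (j + k + 3) * (p * (n : ℝ) ^ (k - j)) ≤ 1 / 2 := by
    rw [lt_div_iff₀ (by positivity)] at hQ
    linarith
  have hjk3 : (3 : ℝ) ≤ j + k + 3 := by
    have h1 : (0 : ℝ) ≤ j := Nat.cast_nonneg j
    have h2 : (0 : ℝ) ≤ k := Nat.cast_nonneg k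
    linarith
  have hQ1 : p * (n : ℝ) ^ (k - j) ≤ 1 := by nlinarith
  have hlam : lam k j n = (n : ℝ) ^ (k - j + 1) * p := by
    unfold lam; rw [pow_succ]; ring
  refine ⟨(cfg k j n).card * p ^ (j + 2), ?_, ?_, hl, ?_, hδ, le_expect hj hjk hp0.le (by linarith),
    expect_le hj hjk hp0.le (by linarith), ?_⟩
  · rw [hlam, mul_pow, ← mul_assoc]
    exact mul_le_mul_of_nonneg_right (le_card_cfg' hjk hn10) (by positivity)
  · rw [hlam, mul_pow]
    exact mul_le_mul_of_nonneg_right (card_cfg_le hjk) (by positivity)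
  · positivity
  · exact expect_sq_le hj hjk hp0.le (by linarith) hQ1

lemma ovC_nonneg (k j : ℕ) : 0 ≤ ovC k j := by unfold ovC; positivity

/-- Lemma 4.2: at `p = p_{j-1}^-`, `E[X_*] = Θ((log n)^{j+2})` and whp
`X_* = (1+o(1))·E[X_*]`. -/
theorem statement8 (k j : ℕ) (hk : 2 ≤ k) (hj : 1 ≤ j) (hjk : j < k) :
    (∃ c₁ c₂ : ℝ, 0 < c₁ ∧ c₁ ≤ c₂ ∧ ∀ᶠ n : ℕ in atTop,
      c₁ * (Real.log n) ^ (j + 2) ≤ expectStar k j n ∧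
        expectStar k j n ≤ c₂ * (Real.log n) ^ (j + 2)) ∧
    ∀ ε : ℝ, 0 < ε →
      Tendsto (fun n : ℕ => birthMeasure n {t : Finset (Fin n) → ℝ |
        |(countMjStar k j (complexAt k n t (pjPrevMinus k j n)) : ℝ) - expectStar k j n| ≤
          ε * expectStar k j n}) atTop (nhds 1) := by
  have hc := cc_pos k j
  have hg := gam_pos (k := k) hj
  constructor
  · refine ⟨cc k j / 2 * (gam k j / 2) ^ (j + 2),
      max (cc k j / 2 * (gam k j / 2) ^ (j + 2)) (gam k j ^ (j + 2)), by positivity,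
      le_max_left _ _, ?_⟩
    filter_upwards [ev_main k j hj hjk, ev_log k j hj, eventually_ge_atTop 1] with n h hl hn
    obtain ⟨y, h1, h2, h3, h4, h5, h6, h7, -⟩ := h
    have hlog : 0 ≤ Real.log n := Real.log_natCast_nonneg n
    have hy0 : 0 ≤ y := le_trans (by positivity) h1
    constructor
    · calc cc k j / 2 * (gam k j / 2) ^ (j + 2) * (Real.log n) ^ (j + 2)
          = cc k j / 2 * (gam k j / 2 * Real.log n) ^ (j + 2) := by rw [mul_pow]; ring
        _ ≤ cc k j / 2 * (lam k j n) ^ (j + 2) := by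
            have := hl.1
            gcongr
        _ ≤ y / 2 := by linarith
        _ ≤ _ := le_trans (by nlinarith) h6
    · calc expectStar k j n ≤ (lam k j n) ^ (j + 2) := h7.trans h2
        _ ≤ (gam k j * Real.log n) ^ (j + 2) := by
            have := hl.2
            gcongr
        _ = gam k j ^ (j + 2) * (Real.log n) ^ (j + 2) := mul_pow _ _ _
        _ ≤ _ := by
            gcongr
            exact le_max_right _ _
  · intro ε hε
    set r : ℕ → ℝ := fun n => 4 / ε ^ 2 *
      (2 * ((j + k + 3) * (pjPrevMinus k j n * (n : ℝ) ^ (k - j))) +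
        2 * ovC k j / cc k j * (lam k j n)⁻¹) with hr
    have hr0 : Tendsto r atTop (nhds 0) := by
      have h1 := ((Q_tendsto k j hj).const_mul ((j : ℝ) + k + 3)).const_mul 2
      have h2 := (tendsto_inv_atTop_zero.comp (lam_tendsto k j hj)).const_mul
        (2 * ovC k j / cc k j)
      have h3 := (h1.add h2).const_mul (4 / ε ^ 2)
      simpa using h3
    have hlow : Tendsto (fun n => 1 - ENNReal.ofReal (r n)) atTop (nhds 1) := by
      have h1 := ENNReal.tendsto_ofReal hr0
      rw [ENNReal.ofReal_zero] at h1
      have h2 := ENNReal.Tendsto.sub (tendsto_const_nhds (x := (1 : ENNReal))) h1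
        (Or.inl ENNReal.one_ne_top)
      simpa using h2
    refine tendsto_of_tendsto_of_tendsto_of_le_of_le' hlow tendsto_const_nhds ?_ ?_
    · filter_upwards [ev_main k j hj hjk] with n h
      obtain ⟨y, h1, h2, h3, h4, h5, h6, h7, h8⟩ := h
      set δ := ((j : ℝ) + k + 3) * (pjPrevMinus k j n * (n : ℝ) ^ (k - j)) with hδ
      set l := lam k j n with hl
      have hl0 : 0 < l := by linarith
      have hy0 : 0 < y := lt_of_lt_of_le (by positivity) h1
      have hE : y / 2 ≤ expectStar k j n := le_trans (by nlinarith) h6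
      have hE0 : 0 < expectStar k j n := by linarith
      refine le_trans ?_ (cheb (k := k) (j := j) (n := n) (p := pjPrevMinus k j n) hε hE0)
      refine tsub_le_tsub_left (ENNReal.ofReal_le_ofReal ?_) 1
      change (_ - expectStar k j n ^ 2) / (ε * expectStar k j n) ^ 2 ≤ r n
      rw [div_le_iff₀ (by positivity)]
      have hyl : ovC k j * (1 + l) ≤ 2 * ovC k j / cc k j * l⁻¹ * y := by
        calc ovC k j * (1 + l) ≤ ovC k j * (2 * l) :=
              mul_le_mul_of_nonneg_left (by linarith) (ovC_nonneg k j)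
          _ = 2 * ovC k j / cc k j * l⁻¹ * (cc k j * l ^ 2) := by field_simp
          _ ≤ 2 * ovC k j / cc k j * l⁻¹ * y := by
              have h9 : cc k j * l ^ 2 ≤ y := by
                refine le_trans ?_ h1
                exact mul_le_mul_of_nonneg_left (pow_le_pow_right₀ h3 (by omega)) hc.le
              have := ovC_nonneg k j
              gcongr
      set q := 2 * ovC k j / cc k j * l⁻¹ with hq
      have hq0 : 0 ≤ q := by
        have := ovC_nonneg k j
        positivity
      have hE2 : (y * (1 - δ)) ^ 2 ≤ expectStar k j n ^ 2 :=
        pow_le_pow_left₀ (mul_nonneg hy0.le (by linarith)) h6 2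
      have hE3 : y ^ 2 ≤ 4 * expectStar k j n ^ 2 := by nlinarith
      calc (∫ t, (Xs k j n (pjPrevMinus k j n) t) ^ 2 ∂(birthMeasure n)) - expectStar k j n ^ 2
          ≤ (y ^ 2 + y * (q * y)) - (y * (1 - δ)) ^ 2 := by
            have := mul_le_mul_of_nonneg_left hyl hy0.le
            linarith
        _ ≤ (2 * δ + q) * y ^ 2 := by nlinarith [sq_nonneg (y * δ)]
        _ ≤ (2 * δ + q) * (4 * expectStar k j n ^ 2) := by gcongr
        _ = r n * (ε * expectStar k j n) ^ 2 := by
            simp only [hr]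
            rw [← hδ, ← hl, ← hq]
            field_simp
    · refine Eventually.of_forall fun n => ?_
      have := birth_prob n
      exact prob_le_one

end RSC
end

section
/- Let k ≥ 2 and j ∈ {1,…,k−1}, and set p = p(n) = p_j^{(1)} := 1/(10·(j+1)·binom(k+1, j+1)·n^{k−j}). Then there exists a positive constant γ such that with high probability, for every (j+1)-subset B of [n], the complex G_p + B (obtained by adding B and all of its non-empty subsets to G_p) contains at least γ·n many j-shells that contain B, i.e. at least γ·n vertices a ∈ [n] \ B such that every (j+1)-subset of B ∪ {a} is a j-simplex of G_p + B. -/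
open MeasureTheory Filter

attribute [local instance] Classical.propDecidable

namespace RSC

variable {V : Type*}

/-- The complex `G + B` obtained by adding the set `B` and its downward-closure. -/
def plusSet (G : Set (Finset V)) (B : Finset V) : Set (Finset V) :=
  G ∪ {A | A.Nonempty ∧ A ⊆ B}

/-- Currying preserves product measures. -/
lemma curry_preserving {αα ββ E : Type*} [Fintype αα] [Fintype ββ] [MeasurableSpace E]
    (ρ : Measure E) [IsProbabilityMeasure ρ] :
    MeasurePreserving (MeasurableEquiv.curry αα ββ E)
      (Measure.pi fun _ => ρ) (Measure.pi fun _ => Measure.pi fun _ => ρ) := by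
  have : MeasurePreserving (MeasurableEquiv.curry αα ββ E).symm
      (Measure.pi fun _ => Measure.pi fun _ => ρ) (Measure.pi fun _ => ρ) := by
    refine ⟨(MeasurableEquiv.curry αα ββ E).symm.measurable, ?_⟩
    symm
    refine Measure.pi_eq fun s hs => ?_
    rw [MeasurableEquiv.map_apply]
    have : (MeasurableEquiv.curry αα ββ E).symm ⁻¹' Set.univ.pi s
        = Set.univ.pi fun a => Set.univ.pi fun b => s (a, b) := by
      ext x
      simp only [Set.mem_preimage, Set.mem_pi, Set.mem_univ, true_implies, Prod.forall]
      rfl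
    rw [this, Measure.pi_pi]
    simp_rw [Measure.pi_pi]
    rw [Fintype.prod_prod_type]
  exact this.symm _

open ProbabilityTheory in
/-- Reading a product measure along an injective family of coordinates, arranged in three levels,
gives the nested product measure. -/
lemma map_nested {α β ω κ : Type*} [Fintype α] [Fintype β] [Fintype ω] [Fintype κ]
    (ν : Measure ℝ) [IsProbabilityMeasure ν] (e : α → β → ω → κ)
    (he : Function.Injective (fun x : α × β × ω => e x.1 x.2.1 x.2.2)) :
    MeasurePreserving (fun (x : κ → ℝ) (a : α) (b : β) (w : ω) => x (e a b w))
      (Measure.pi fun _ => ν)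
      (Measure.pi fun _ => Measure.pi fun _ => Measure.pi fun _ => ν) := by
  let g : α × β × ω → κ := fun x => e x.1 x.2.1 x.2.2
  have h1 : MeasurePreserving (fun (x : κ → ℝ) (i : α × β × ω) => x (g i))
      (Measure.pi fun _ => ν) (Measure.pi fun _ => ν) := by
    refine ⟨by fun_prop, ?_⟩
    have hi : iIndepFun (fun (i : κ) (x : κ → ℝ) => x i) (Measure.pi fun _ => ν) :=
      iIndepFun_pi (X := fun _ y => y) (fun _ => aemeasurable_id)
    have hi2 := hi.precomp he
    rw [hi2.map_fun_eq_pi_map (fun i => (measurable_pi_apply _).aemeasurable)]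
    congr 1
    funext i
    exact (measurePreserving_eval (fun _ : κ => ν) (g i)).map_eq
  have h2 := curry_preserving (αα := α) (ββ := β × ω) ν
  have h3 : MeasurePreserving (fun (x : α → β × ω → ℝ) (a : α) => 
      MeasurableEquiv.curry β ω ℝ (x a))
      (Measure.pi fun _ => Measure.pi fun _ => ν) 
      (Measure.pi fun _ => Measure.pi fun _ => Measure.pi fun _ => ν) :=
    measurePreserving_pi _ _ fun _ => curry_preserving (αα := β) (ββ := ω) ν
  exact h3.comp (h2.comp h1)

/-- Lower tail bound for the number of `a` such that all `b` have a successful `w`. -/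
lemma tail_nested {α β ω : Type*} [Fintype α] [Fintype β] [Fintype ω]
    (ν : Measure ℝ) [IsProbabilityMeasure ν] (s : Set ℝ) (hs : MeasurableSet s) (m : ℝ) :
    (Measure.pi fun _ : α => Measure.pi fun _ : β => Measure.pi fun _ : ω => ν).real
      {y | ({a | ∀ b, ∃ w, y a b w ∈ s} : Set α).ncard ≤ m} ≤
    2 ^ m * (1 - (1 - (1 - ν.real s) ^ Fintype.card ω) ^ Fintype.card β / 2) ^ Fintype.card α := by
  let T : Set (ω → ℝ) := {z | ∃ w, z w ∈ s}
  have hT : MeasurableSet T := by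
    have : T = ⋃ w, (fun z : ω → ℝ => z w) ⁻¹' s := by ext; simp [T]
    rw [this]
    exact MeasurableSet.iUnion fun w => measurable_pi_apply w hs
  have hTm : (Measure.pi fun _ : ω => ν).real T = 1 - (1 - ν.real s) ^ Fintype.card ω := by
    have : T = (Set.univ.pi fun _ => sᶜ)ᶜ := by ext; simp [T]
    rw [this, probReal_compl_eq_one_sub (MeasurableSet.univ_pi fun _ => hs.compl), 
      measureReal_def, Measure.pi_pi]
    simp only [Finset.prod_const, ENNReal.toReal_pow, Finset.card_univ]
    rw [← measureReal_def, probReal_compl_eq_one_sub hs]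
  let U : Set (β → ω → ℝ) := Set.univ.pi fun _ => T
  have hU : MeasurableSet U := MeasurableSet.univ_pi fun _ => hT
  have hUm : (Measure.pi fun _ : β => Measure.pi fun _ : ω => ν).real U = 
      (1 - (1 - ν.real s) ^ Fintype.card ω) ^ Fintype.card β := by
    rw [measureReal_def, Measure.pi_pi, ← hTm]
    simp [measureReal_def]
  let f : (β → ω → ℝ) → ℝ := fun z => 1 - U.indicator (fun _ => (1/2 : ℝ)) z
  have hf : Measurable f := measurable_const.sub (measurable_const.indicator hU)
  have hf0 : ∀ z, 0 ≤ f z := by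
    intro z
    by_cases h : z ∈ U <;> simp [f, h]; norm_num
  have hf1 : ∀ z, f z ≤ 1 := by
    intro z
    by_cases h : z ∈ U <;> simp [f, h]
  have hfi : ∫ z, f z ∂(Measure.pi fun _ : β => Measure.pi fun _ : ω => ν) = 
      1 - (1 - (1 - ν.real s) ^ Fintype.card ω) ^ Fintype.card β / 2 := by
    rw [integral_sub (integrable_const _) ((integrable_const _).indicator hU), 
      integral_indicator_const _ hU, hUm]
    simp
    ring
  have hint : ∫ y, ∏ a, f (y a) 
      ∂(Measure.pi fun _ : α => Measure.pi fun _ : β => Measure.pi fun _ : ω => ν) =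
      (1 - (1 - (1 - ν.real s) ^ Fintype.card ω) ^ Fintype.card β / 2) ^ Fintype.card α := by
    rw [integral_fintype_prod_eq_prod (fun _ : α => f), ← hfi]
    simp
  have hprod : ∀ y : α → β → ω → ℝ, ∏ a, f (y a) = 
      (2 : ℝ) ^ (-((({a | ∀ b, ∃ w, y a b w ∈ s} : Set α).ncard : ℕ) : ℝ)) := by
    intro y
    have h1 : ∀ a, f (y a) = if (∀ b, ∃ w, y a b w ∈ s) then (1/2 : ℝ) else 1 := by
      intro a
      by_cases h : ∀ b, ∃ w, y a b w ∈ s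
      · have : y a ∈ U := by simpa [U, T] using h
        rw [if_pos h]; simp [f, this]; norm_num
      · have : y a ∉ U := by simpa [U, T] using h
        rw [if_neg h]; simp [f, this]
    simp_rw [h1]
    rw [Finset.prod_ite, Finset.prod_const, Finset.prod_const_one, mul_one, Real.rpow_neg (by norm_num),
      Real.rpow_natCast, Set.ncard_eq_toFinset_card', Set.toFinset_ofPred]
    simp
  have hmk := mul_meas_ge_le_integral_of_nonneg 
    (μ := Measure.pi fun _ : α => Measure.pi fun _ : β => Measure.pi fun _ : ω => ν)
    (f := fun y => ∏ a, f (y a)) (Filter.Eventually.of_forall fun y => Finset.prod_nonneg fun a _ => hf0 _)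
    (by
      refine Integrable.of_bound (C := 1) ?_ ?_
      · refine Measurable.aestronglyMeasurable ?_
        exact Finset.measurable_prod _ fun a _ => hf.comp (measurable_pi_apply a)
      · refine Filter.Eventually.of_forall fun y => ?_
        rw [Real.norm_of_nonneg (Finset.prod_nonneg fun a _ => hf0 _)]
        exact Finset.prod_le_one (fun a _ => hf0 _) fun a _ => hf1 _)
    ((2 : ℝ) ^ (-m))
  rw [hint] at hmk
  have hsub : {y : α → β → ω → ℝ | ({a | ∀ b, ∃ w, y a b w ∈ s} : Set α).ncard ≤ m} ⊆
      {y | (2 : ℝ) ^ (-m) ≤ ∏ a, f (y a)} := by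
    intro y hy
    simp only [Set.mem_ofPred_eq] at hy ⊢
    rw [hprod]
    exact Real.rpow_le_rpow_of_exponent_le (by norm_num) (by linarith)
  have hmono := measureReal_mono 
    (μ := Measure.pi fun _ : α => Measure.pi fun _ : β => Measure.pi fun _ : ω => ν) hsub
  have h2 : (0 : ℝ) < 2 ^ m := by positivity
  rw [Real.rpow_neg (by norm_num)] at hmk
  have := mul_le_mul_of_nonneg_left hmk h2.le
  rw [← mul_assoc, mul_inv_cancel₀ h2.ne', one_mul, ← Real.rpow_neg (by norm_num)] at this
  exact hmono.trans this

/-- Combinatorial step: successful vertices give shells. -/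
lemma shell_of_success {k j n : ℕ} (hjk : j < k) (t : Finset (Fin n) → ℝ) (p : ℝ) 
    (B A D : Finset (Fin n)) (hB : B.card = j + 1) (hAB : Disjoint A B) (hDB : Disjoint D B)
    (hAD : Disjoint A D) (a : Fin n) (ha : a ∈ A)
    (h : ∀ C ∈ Finset.powersetCard j B, ∃ W ∈ Finset.powersetCard (k - j) D, 
      t (insert a (C ∪ W)) ≤ p) :
    a ∉ B ∧ IsShell (plusSet (complexAt k n t p) B) j (insert a B) := by
  have haB : a ∉ B := Finset.disjoint_left.1 hAB ha
  refine ⟨haB, by rw [Finset.card_insert_of_notMem haB, hB], fun τ hτ hc => ?_⟩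
  have hne : τ.Nonempty := Finset.card_pos.1 (by omega)
  by_cases haτ : a ∈ τ
  · left
    right
    refine ⟨hne, ?_⟩
    have hCB : τ.erase a ⊆ B := by
      intro x hx
      rw [Finset.mem_erase] at hx
      have := hτ hx.2
      rw [Finset.mem_insert] at this
      tauto
    obtain ⟨W, hW, ht⟩ := h (τ.erase a) (Finset.mem_powersetCard.2 
      ⟨hCB, by rw [Finset.card_erase_of_mem haτ, hc]; rfl⟩)
    rw [Finset.mem_powersetCard] at hW
    refine ⟨_, ?_, ht, ?_⟩
    · rw [Finset.card_insert_of_notMem, Finset.card_union_of_disjoint, 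
        Finset.card_erase_of_mem haτ, hc, hW.2]
      · omega
      · exact (hDB.mono hW.1 hCB).symm
      · rw [Finset.mem_union]
        rintro (h | h)
        · exact haB (hCB h)
        · exact Finset.disjoint_left.1 hAD ha (hW.1 h)
    · intro x hx
      by_cases hxa : x = a
      · simp [hxa]
      · simp [hxa, hx]
  · right
    refine ⟨hne, fun x hx => ?_⟩
    have := hτ hx
    rw [Finset.mem_insert] at this
    rcases this with rfl | h
    · exact absurd hx haτ
    · exact h

lemma key_injective {n : ℕ} (B A D : Finset (Fin n)) (hAB : Disjoint A B) (hDB : Disjoint D B)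
    (hAD : Disjoint A D) (j r : ℕ) : 
    Function.Injective (fun x : A × Finset.powersetCard j B × Finset.powersetCard r D =>
      insert x.1.1 (x.2.1.1 ∪ x.2.2.1)) := by
  rintro ⟨⟨a, ha⟩, ⟨C, hC⟩, ⟨W, hW⟩⟩ ⟨⟨a', ha'⟩, ⟨C', hC'⟩, ⟨W', hW'⟩⟩ h
  simp only at h
  have hC2 := (Finset.mem_powersetCard.1 hC).1
  have hC2' := (Finset.mem_powersetCard.1 hC').1
  have hW2 := (Finset.mem_powersetCard.1 hW).1
  have hW2' := (Finset.mem_powersetCard.1 hW').1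
  rw [Finset.disjoint_left] at hAB hDB hAD
  rw [Finset.ext_iff] at h
  simp only [Finset.mem_insert, Finset.mem_union] at h
  have e1 : a = a' := by
    have := (h a).1 (Or.inl rfl)
    rcases this with h | h | h
    · exact h
    · exact absurd (hC2' h) (hAB ha)
    · exact absurd (hW2' h) (hAD ha)
  have e2 : C = C' := by
    ext x
    constructor <;> intro hx
    · rcases (h x).1 (Or.inr (Or.inl hx)) with h | h | h
      · exact absurd (hC2 hx) (hAB (h ▸ ha'))
      · exact h
      · exact absurd (hC2 hx) (hDB (hW2' h))
    · rcases (h x).2 (Or.inr (Or.inl hx)) with h | h | h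
      · exact absurd (hC2' hx) (hAB (h ▸ ha))
      · exact h
      · exact absurd (hC2' hx) (hDB (hW2 h))
  have e3 : W = W' := by
    ext x
    constructor <;> intro hx
    · rcases (h x).1 (Or.inr (Or.inr hx)) with h | h | h
      · exact absurd (hW2 hx) (hAD (h ▸ ha'))
      · exact absurd (hC2' h) (hDB (hW2 hx))
      · exact h
    · rcases (h x).2 (Or.inr (Or.inr hx)) with h | h | h
      · exact absurd (hW2' hx) (hAD (h ▸ ha))
      · exact absurd (hC2 h) (hDB (hW2' hx))
      · exact h
  subst e1 e2 e3
  rfl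

instance unitProb : IsProbabilityMeasure (volume.restrict (Set.Icc (0 : ℝ) 1)) :=
  ⟨by simp⟩

instance birthProb (n : ℕ) : IsProbabilityMeasure (birthMeasure n) := by
  unfold birthMeasure; infer_instance

lemma unit_real_Iic (p : ℝ) (h0 : 0 ≤ p) (h1 : p ≤ 1) :
    (volume.restrict (Set.Icc (0 : ℝ) 1)).real (Set.Iic p) = p := by
  rw [measureReal_def, Measure.restrict_apply measurableSet_Iic]
  have : Set.Iic p ∩ Set.Icc 0 1 = Set.Icc (0 : ℝ) p := by
    ext x; simp only [Set.mem_inter_iff, Set.mem_Iic, Set.mem_Icc]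
    constructor
    · rintro ⟨a, b, c⟩; exact ⟨b, a⟩
    · rintro ⟨a, b⟩; exact ⟨b, a, b.trans h1⟩
  rw [this]; simp [h0]

/-- Probability bound for a single `B`. -/
lemma single_bound {k j n : ℕ} (hjk : j < k) (p : ℝ) (h0 : 0 ≤ p) (h1 : p ≤ 1) (m : ℝ)
    (B A D : Finset (Fin n)) (hB : B.card = j + 1) (hAB : Disjoint A B) (hDB : Disjoint D B)
    (hAD : Disjoint A D) :
    (birthMeasure n).real {t | (({a : Fin n | a ∉ B ∧
            IsShell (plusSet (complexAt k n t p) B) j (insert a B)}).ncard : ℝ) ≤ m} ≤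
    2 ^ m * (1 - (1 - (1 - p) ^ (D.card.choose (k - j))) ^ (j + 1) / 2) ^ A.card := by
  have hmp := map_nested (α := A) (β := Finset.powersetCard j B) 
    (ω := Finset.powersetCard (k - j) D) (volume.restrict (Set.Icc (0 : ℝ) 1))
    (fun a C W => insert a.1 (C.1 ∪ W.1)) (key_injective B A D hAB hDB hAD j (k - j))
  have ht := tail_nested (α := A) (β := Finset.powersetCard j B) 
    (ω := Finset.powersetCard (k - j) D) (volume.restrict (Set.Icc (0 : ℝ) 1)) 
    (Set.Iic p) measurableSet_Iic m
  simp only [unit_real_Iic p h0 h1, Fintype.card_coe, Finset.card_powersetCard, hB, 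
    Nat.choose_succ_self_right] at ht
  refine le_trans ?_ ht
  rw [← hmp.map_eq]
  refine le_trans ?_ (ENNReal.toReal_mono (measure_ne_top _ _) 
    (Measure.le_map_apply hmp.measurable.aemeasurable _))
  refine measureReal_mono (μ := birthMeasure n) ?_
  intro t h
  simp only [Set.mem_ofPred_eq, Set.mem_preimage] at h ⊢
  refine le_trans ?_ h
  rw [Nat.cast_le, ← Set.ncard_image_of_injective _ Subtype.val_injective]
  refine Set.ncard_le_ncard ?_ (Set.toFinite _)
  rintro _ ⟨⟨a, ha⟩, hs, rfl⟩
  refine shell_of_success hjk t p B A D hB hAB hDB hAD a ha ?_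
  intro C hC
  obtain ⟨⟨W, hW⟩, h⟩ := hs ⟨C, hC⟩
  exact ⟨W, hW, h⟩


/-- Uniform exponential bound for a single `B` at `p = p_j^{(1)}`. -/
lemma uniform_bound {k j n : ℕ} (hjk : j < k) (hn : 100 * (k + 1) ≤ n) (c δ q : ℝ)
    (hc : c = 1 / (10 * ((j : ℝ) + 1) * (Nat.choose (k + 1) (j + 1))))
    (hδ : δ = c / (4 ^ (k - j) * (k - j).factorial))
    (hq : q = (1 - Real.exp (-δ)) ^ (j + 1))
    (B : Finset (Fin n)) (hB : B.card = j + 1) :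
    (birthMeasure n).real {t | (({a : Fin n | a ∉ B ∧
            IsShell (plusSet (complexAt k n t (pjOne k j n)) B) j (insert a B)}).ncard : ℝ)
              ≤ q / 16 * n} ≤ Real.exp (-(q / 16) * n) := by
  have hch : (1 : ℝ) ≤ Nat.choose (k + 1) (j + 1) := by
    exact_mod_cast Nat.choose_pos (by omega)
  have hden : (1 : ℝ) ≤ 10 * ((j : ℝ) + 1) * (Nat.choose (k + 1) (j + 1)) := by
    have : (0 : ℝ) ≤ j := by positivity
    nlinarith
  have hc0 : 0 < c := by rw [hc]; positivity
  have hc1 : c ≤ 1 := by rw [hc]; exact (div_le_one (by positivity)).2 hden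
  have hn1 : (1 : ℝ) ≤ n := by exact_mod_cast (by omega : 1 ≤ n)
  have hnr : (1 : ℝ) ≤ (n : ℝ) ^ (k - j) := one_le_pow₀ hn1
  have hp : pjOne k j n = c / (n : ℝ) ^ (k - j) := by
    rw [pjOne, hc, div_div]
  have hp0 : 0 ≤ pjOne k j n := by rw [hp]; positivity
  have hp1 : pjOne k j n ≤ 1 := by
    rw [hp]; exact (div_le_one (by positivity)).2 (hc1.trans hnr)
  have hδ0 : 0 < δ := by rw [hδ]; positivity
  have he1 : Real.exp (-δ) < 1 := by rw [Real.exp_lt_one_iff]; linarith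
  have he0 := Real.exp_pos (-δ)
  have hq0 : 0 < q := by rw [hq]; exact pow_pos (by linarith) _
  have hBc : (Bᶜ).card = n - (j + 1) := by rw [Finset.card_compl, hB, Fintype.card_fin]
  obtain ⟨A, hA, hAc⟩ := Finset.exists_subset_card_eq (s := Bᶜ) (n := n / 3) (by omega)
  have hAB : Disjoint A B := Finset.disjoint_left.2 fun x hx => Finset.mem_compl.1 (hA hx)
  have hDB : Disjoint (Bᶜ \ A) B := Finset.disjoint_left.2 fun x hx =>
    Finset.mem_compl.1 (Finset.mem_sdiff.1 hx).1
  have hAD : Disjoint A (Bᶜ \ A) := Finset.disjoint_sdiff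
  have hDc : (Bᶜ \ A).card = n - (j + 1) - n / 3 := by
    rw [Finset.card_sdiff_of_subset hA, hBc, hAc]
  have hb := single_bound hjk (pjOne k j n) hp0 hp1 (q / 16 * n) B A (Bᶜ \ A) hB hAB hDB hAD
  refine hb.trans ?_
  set M := (Bᶜ \ A).card.choose (k - j) with hM
  have hMl : ((n : ℝ) / 4) ^ (k - j) / (k - j).factorial ≤ M := by
    refine le_trans ?_ (Nat.pow_le_choose (α := ℝ) (k - j) (Bᶜ \ A).card)
    have : (n : ℝ) / 4 ≤ (((Bᶜ \ A).card + 1 - (k - j) : ℕ) : ℝ) := by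
      rw [div_le_iff₀ (by norm_num)]
      exact_mod_cast (by omega : n ≤ ((Bᶜ \ A).card + 1 - (k - j)) * 4)
    gcongr
  have hpM : δ ≤ pjOne k j n * M := by
    calc δ = pjOne k j n * (((n : ℝ) / 4) ^ (k - j) / (k - j).factorial) := by
          rw [hp, hδ, div_pow]
          field_simp
      _ ≤ _ := mul_le_mul_of_nonneg_left hMl hp0
  have hpow : (1 - pjOne k j n) ^ M ≤ Real.exp (-δ) := by
    calc (1 - pjOne k j n) ^ M ≤ (Real.exp (-pjOne k j n)) ^ M :=
          pow_le_pow_left₀ (by linarith) (Real.one_sub_le_exp_neg _) _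
      _ = Real.exp (-(pjOne k j n * M)) := by rw [← Real.exp_nat_mul]; ring_nf
      _ ≤ _ := Real.exp_le_exp.2 (by linarith)
  have hpow0 : 0 ≤ (1 - pjOne k j n) ^ M := pow_nonneg (by linarith) _
  have hqle : q ≤ (1 - (1 - pjOne k j n) ^ M) ^ (j + 1) := by
    rw [hq]; exact pow_le_pow_left₀ (by linarith) (by linarith) _
  have hqle1 : (1 - (1 - pjOne k j n) ^ M) ^ (j + 1) ≤ 1 :=
    pow_le_one₀ (by linarith) (by linarith)
  have hN : (n : ℝ) / 4 ≤ A.card := by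
    rw [hAc, div_le_iff₀ (by norm_num)]
    exact_mod_cast (by omega : n ≤ n / 3 * 4)
  have hbase : (1 - (1 - (1 - pjOne k j n) ^ M) ^ (j + 1) / 2) ^ A.card ≤
      Real.exp (-(q / 8) * n) := by
    calc _ ≤ (Real.exp (-(q / 2))) ^ A.card := by
          refine pow_le_pow_left₀ (by linarith) ?_ _
          exact le_trans (by linarith) (Real.one_sub_le_exp_neg (q / 2))
      _ = Real.exp (A.card * (-(q / 2))) := by rw [← Real.exp_nat_mul]
      _ ≤ _ := Real.exp_le_exp.2 (by nlinarith)
  have htwo : (2 : ℝ) ^ (q / 16 * n) ≤ Real.exp (q / 16 * n) := by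
    rw [← Real.exp_one_rpow (q / 16 * n)]
    refine Real.rpow_le_rpow (by norm_num) ?_ (by positivity)
    have := Real.add_one_le_exp (1 : ℝ)
    linarith
  calc _ ≤ Real.exp (q / 16 * n) * Real.exp (-(q / 8) * n) :=
        mul_le_mul htwo hbase (pow_nonneg (by linarith) _) (Real.exp_pos _).le
    _ = _ := by rw [← Real.exp_add]; congr 1; ring

/-- Lemma 4.3: at `p = p_j^{(1)}`, there is a constant `γ > 0` such that whp every
`(j+1)`-set `B` lies in at least `γ·n` many `j`-shells of `G_p + B`. -/
theorem statement9 (k j : ℕ) (hk : 2 ≤ k) (hj : 1 ≤ j) (hjk : j < k) :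
    ∃ γ : ℝ, 0 < γ ∧
      Tendsto (fun n : ℕ => birthMeasure n {t : Finset (Fin n) → ℝ |
        ∀ B : Finset (Fin n), B.card = j + 1 →
          γ * n ≤ (({a : Fin n | a ∉ B ∧
            IsShell (plusSet (complexAt k n t (pjOne k j n)) B) j (insert a B)}).ncard : ℝ)})
        atTop (nhds 1) := by
  obtain ⟨c, hc⟩ : ∃ c : ℝ, c = 1 / (10 * ((j : ℝ) + 1) * (Nat.choose (k + 1) (j + 1))) := ⟨_, rfl⟩
  obtain ⟨δ, hδ⟩ : ∃ δ : ℝ, δ = c / (4 ^ (k - j) * (k - j).factorial) := ⟨_, rfl⟩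
  obtain ⟨q, hq⟩ : ∃ q : ℝ, q = (1 - Real.exp (-δ)) ^ (j + 1) := ⟨_, rfl⟩
  have hch : (0 : ℝ) < Nat.choose (k + 1) (j + 1) := by
    exact_mod_cast Nat.choose_pos (by omega)
  have hc0 : 0 < c := by rw [hc]; positivity
  have hδ0 : 0 < δ := by rw [hδ]; positivity
  have he1 : Real.exp (-δ) < 1 := by rw [Real.exp_lt_one_iff]; linarith
  have hq0 : 0 < q := by rw [hq]; exact pow_pos (by linarith) _
  refine ⟨q / 16, by positivity, ?_⟩
  have hlim : Tendsto (fun n : ℕ => (n : ℝ) ^ (j + 1) * Real.exp (-(q / 16) * n)) atTop (nhds 0) := by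
    have h1 := tendsto_rpow_mul_exp_neg_mul_atTop_nhds_zero ((j + 1 : ℕ) : ℝ) (q / 16) (by positivity)
    simp only [Real.rpow_natCast] at h1
    exact h1.comp tendsto_natCast_atTop_atTop
  have hlim2 : Tendsto (fun n : ℕ => 1 - ENNReal.ofReal ((n : ℝ) ^ (j + 1) * Real.exp (-(q / 16) * n)))
      atTop (nhds 1) := by
    have h1 := ENNReal.tendsto_ofReal hlim
    have h2 := ENNReal.Tendsto.sub (tendsto_const_nhds (x := (1 : ENNReal)) (f := atTop (α := ℕ))) h1
      (Or.inl ENNReal.one_ne_top)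
    simpa using h2
  refine tendsto_of_tendsto_of_tendsto_of_le_of_le' hlim2 tendsto_const_nhds ?_
    (Filter.Eventually.of_forall fun n => prob_le_one)
  filter_upwards [eventually_ge_atTop (100 * (k + 1))] with n hn
  set S := {t : Finset (Fin n) → ℝ |
        ∀ B : Finset (Fin n), B.card = j + 1 →
          q / 16 * n ≤ (({a : Fin n | a ∉ B ∧
            IsShell (plusSet (complexAt k n t (pjOne k j n)) B) j (insert a B)}).ncard : ℝ)} with hS
  let bad : Finset (Fin n) → Set (Finset (Fin n) → ℝ) := fun B =>
    {t | (({a : Fin n | a ∉ B ∧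
            IsShell (plusSet (complexAt k n t (pjOne k j n)) B) j (insert a B)}).ncard : ℝ)
              ≤ q / 16 * n}
  have hcov : Sᶜ ⊆ ⋃ B ∈ Finset.powersetCard (j + 1) (Finset.univ : Finset (Fin n)), bad B := by
    intro t ht
    simp only [hS, Set.mem_compl_iff, Set.mem_ofPred_eq, not_forall, not_le] at ht
    obtain ⟨B, hB, h⟩ := ht
    simp only [Set.mem_iUnion]
    exact ⟨B, Finset.mem_powersetCard.2 ⟨Finset.subset_univ _, hB⟩, h.le⟩
  have hbad : birthMeasure n Sᶜ ≤ ENNReal.ofReal ((n : ℝ) ^ (j + 1) * Real.exp (-(q / 16) * n)) := by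
    calc birthMeasure n Sᶜ ≤ _ := measure_mono hcov
      _ ≤ ∑ B ∈ Finset.powersetCard (j + 1) (Finset.univ : Finset (Fin n)), birthMeasure n (bad B) :=
          measure_biUnion_finset_le _ _
      _ ≤ ∑ B ∈ Finset.powersetCard (j + 1) (Finset.univ : Finset (Fin n)),
            ENNReal.ofReal (Real.exp (-(q / 16) * n)) := by
          refine Finset.sum_le_sum fun B hB => ?_
          rw [← ofReal_measureReal]
          exact ENNReal.ofReal_le_ofReal (uniform_bound hjk hn c δ q hc hδ hq B
            (Finset.mem_powersetCard.1 hB).2)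
      _ = ENNReal.ofReal ((n.choose (j + 1) : ℝ) * Real.exp (-(q / 16) * n)) := by
          rw [Finset.sum_const, Finset.card_powersetCard, Finset.card_univ, Fintype.card_fin,
            nsmul_eq_mul, ENNReal.ofReal_mul (by positivity), ENNReal.ofReal_natCast]
      _ ≤ _ := by
          refine ENNReal.ofReal_le_ofReal ?_
          have : (n.choose (j + 1) : ℝ) ≤ (n : ℝ) ^ (j + 1) := by
            exact_mod_cast Nat.choose_le_pow n (j + 1)
          gcongr
  have hone : 1 ≤ birthMeasure n S + birthMeasure n Sᶜ := by
    have h := measure_union_le (μ := birthMeasure n) S Sᶜ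
    rwa [Set.union_compl_self, measure_univ] at h
  rw [tsub_le_iff_right]
  exact hone.trans (by gcongr)

end RSC
end
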